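/- The quantum wreath product of polynomial type B≀H(d) has a PBW basis: the 𝕜-linear map B^{⊗d} ⊗_𝕜 𝕜[S_d] → B≀H(d) sending b⊗w ↦ b·H_w is bijective, and likewise the map b⊗w ↦ H_w·b is bijective. In particular, for any 𝕜-basis {b_m} of B^{⊗d}, the sets {b_m·H_w : m, w ∈ S_d} and {H_w·b_m : m, w ∈ S_d} are 𝕜-bases of B≀H(d). -/

import Mathlib

open scoped TensorProduct
open PiTensorProduct MvPolynomial

variable (k F : Type*) (m : ℕ)

/-- Weak Frobenius elements of `F ⊗ F`: `(a⊗b)·Δ = Δ·(b⊗a)` for all `a, b ∈ F`. -/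
def IsWeakFrobenius [CommSemiring k] [Ring F] [Algebra k F] (Δ : F ⊗[k] F) : Prop :=
  ∀ a b : F, (a ⊗ₜ[k] b) * Δ = Δ * (b ⊗ₜ[k] a)

/-- Symmetric elements of `F ⊗ F`: fixed by the flip. -/
def IsSymmEl [CommSemiring k] [Ring F] [Algebra k F] (Δ : F ⊗[k] F) : Prop :=
  (Algebra.TensorProduct.comm k F F) Δ = Δ

section Emb3
variable [CommSemiring k] [Ring F] [Algebra k F]

/-- The embedding `F⊗F → F^{⊗3}` placing the two legs in positions 1, 2. -/
noncomputable def emb12 : F ⊗[k] F →ₗ[k] F ⊗[k] (F ⊗[k] F) :=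
  LinearMap.lTensor F ((TensorProduct.mk k F F).flip 1)

/-- The embedding `F⊗F → F^{⊗3}` placing the two legs in positions 2, 3. -/
noncomputable def emb23 : F ⊗[k] F →ₗ[k] F ⊗[k] (F ⊗[k] F) :=
  TensorProduct.mk k F (F ⊗[k] F) 1

end Emb3

section BD
variable [Field k] [Ring F] [Algebra k F]

/-- The tensor power `F^{⊗d}` for `d = m + 2`. -/
abbrev TPow := ⨂[k] (_ : Fin (m + 2)), F

/-- `B^{⊗d} = F^{⊗d}[x₁,…,x_d]`, modelled as `F^{⊗d} ⊗ 𝕜[x₁,…,x_d]`. -/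
abbrev BD := TPow k F m ⊗[k] MvPolynomial (Fin (m + 2)) k

/-- Insertion of `F` into the `j`-th tensor slot of `F^{⊗d}` (with `1` elsewhere). -/
noncomputable def ins (j : Fin (m + 2)) : F →ₗ[k] TPow k F m where
  toFun a := tprod k (Function.update (fun _ => (1 : F)) j a)
  map_add' a b := by
    simpa using MultilinearMap.map_update_add (tprod k) (fun _ => (1 : F)) j a b
  map_smul' c a := by
    simpa using MultilinearMap.map_update_smul (tprod k) (fun _ => (1 : F)) j c a

/-- The placement of `Y ∈ F⊗F` with its legs in tensor slots `i` and `j` of `F^{⊗d}`. -/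
noncomputable def place (i j : Fin (m + 2)) : F ⊗[k] F →ₗ[k] TPow k F m :=
  TensorProduct.lift
    ((LinearMap.mul k (TPow k F m)).compl₁₂ (ins k F m i) (ins k F m j))

/-- The place-permutation of the tensor slots `i, i+1` of `F^{⊗d}`. -/
noncomputable def sigmaT (i : Fin (m + 1)) : TPow k F m →ₗ[k] TPow k F m :=
  (PiTensorProduct.reindex k (fun _ => F)
      (Equiv.swap i.castSucc i.succ)).toLinearMap

/-- The automorphism `σ_i` of `B^{⊗d}`: swaps the tensor slots `i, i+1` of `F^{⊗d}`
and the variables `x_i, x_{i+1}`. -/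
noncomputable def sigmaB (i : Fin (m + 1)) : BD k F m →ₗ[k] BD k F m :=
  TensorProduct.map (sigmaT k F m i)
    (MvPolynomial.rename (⇑(Equiv.swap i.castSucc i.succ)) :
        MvPolynomial (Fin (m + 2)) k →ₐ[k] MvPolynomial (Fin (m + 2)) k).toLinearMap

/-- The variable `x_j` as an element of `B^{⊗d}`. -/
noncomputable def xv (j : Fin (m + 2)) : BD k F m :=
  (1 : TPow k F m) ⊗ₜ[k] (X j : MvPolynomial (Fin (m + 2)) k)

variable (Δf : Fin 2 → Fin 2 → F ⊗[k] F) (Rv : F ⊗[k] F)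

/-- `β_i ∈ B^{⊗d}`: `β` placed in slots `i, i+1` with variables `x_i, x_{i+1}`. -/
noncomputable def betaI (i : Fin (m + 1)) : BD k F m :=
  (place k F m i.castSucc i.succ (Δf 0 0)) ⊗ₜ[k] (1 : MvPolynomial (Fin (m + 2)) k)
    + (place k F m i.castSucc i.succ (Δf 1 0)) ⊗ₜ[k] (X i.castSucc)
    + (place k F m i.castSucc i.succ (Δf 0 1)) ⊗ₜ[k] (X i.succ)
    + (place k F m i.castSucc i.succ (Δf 1 1)) ⊗ₜ[k] (X i.castSucc * X i.succ)

/-- `S_i ∈ B^{⊗d}`: `S = Δ¹⁰ − Δ⁰¹` placed in slots `i, i+1`. -/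
noncomputable def SI (i : Fin (m + 1)) : BD k F m :=
  (place k F m i.castSucc i.succ (Δf 1 0 - Δf 0 1)) ⊗ₜ[k]
    (1 : MvPolynomial (Fin (m + 2)) k)

/-- `R_i ∈ B^{⊗d}`: `R` placed in slots `i, i+1`. -/
noncomputable def RI (i : Fin (m + 1)) : BD k F m :=
  (place k F m i.castSucc i.succ Rv) ⊗ₜ[k] (1 : MvPolynomial (Fin (m + 2)) k)

end BD

/-- The defining relations of the quantum wreath product of polynomial type
`B ≀ H(d)`, `d = m+2`: the algebra structure of `B^{⊗d}`, the braid relations,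
the quadratic relations and the wreath relations. -/
inductive QRel (k F : Type*) [Field k] [Ring F] [Algebra k F] (m : ℕ)
    (Δf : Fin 2 → Fin 2 → F ⊗[k] F) (Rv : F ⊗[k] F)
    (ρf : Fin (m + 1) → BD k F m →ₗ[k] BD k F m) :
    FreeAlgebra k (BD k F m ⊕ Fin (m + 1)) →
      FreeAlgebra k (BD k F m ⊕ Fin (m + 1)) → Prop
  | add_gen (a b : BD k F m) :
      QRel k F m Δf Rv ρf
        (FreeAlgebra.ι k (Sum.inl a) + FreeAlgebra.ι k (Sum.inl b))
        (FreeAlgebra.ι k (Sum.inl (a + b)))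
  | smul_gen (c : k) (a : BD k F m) :
      QRel k F m Δf Rv ρf (c • FreeAlgebra.ι k (Sum.inl a))
        (FreeAlgebra.ι k (Sum.inl (c • a)))
  | mul_gen (a b : BD k F m) :
      QRel k F m Δf Rv ρf
        (FreeAlgebra.ι k (Sum.inl a) * FreeAlgebra.ι k (Sum.inl b))
        (FreeAlgebra.ι k (Sum.inl (a * b)))
  | one_gen :
      QRel k F m Δf Rv ρf (FreeAlgebra.ι k (Sum.inl (1 : BD k F m))) 1
  | braid_far (i j : Fin (m + 1)) (h : (i : ℕ) + 2 ≤ (j : ℕ) ∨ (j : ℕ) + 2 ≤ (i : ℕ)) :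
      QRel k F m Δf Rv ρf
        (FreeAlgebra.ι k (Sum.inr i) * FreeAlgebra.ι k (Sum.inr j))
        (FreeAlgebra.ι k (Sum.inr j) * FreeAlgebra.ι k (Sum.inr i))
  | braid (i j : Fin (m + 1)) (h : (i : ℕ) + 1 = (j : ℕ)) :
      QRel k F m Δf Rv ρf
        (FreeAlgebra.ι k (Sum.inr i) * FreeAlgebra.ι k (Sum.inr j) *
          FreeAlgebra.ι k (Sum.inr i))
        (FreeAlgebra.ι k (Sum.inr j) * FreeAlgebra.ι k (Sum.inr i) *
          FreeAlgebra.ι k (Sum.inr j))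
  | quad (i : Fin (m + 1)) :
      QRel k F m Δf Rv ρf
        (FreeAlgebra.ι k (Sum.inr i) * FreeAlgebra.ι k (Sum.inr i))
        (FreeAlgebra.ι k (Sum.inl (SI k F m Δf i)) * FreeAlgebra.ι k (Sum.inr i)
          + FreeAlgebra.ι k (Sum.inl (RI k F m Rv i)))
  | wreath (i : Fin (m + 1)) (b : BD k F m) :
      QRel k F m Δf Rv ρf
        (FreeAlgebra.ι k (Sum.inr i) * FreeAlgebra.ι k (Sum.inl b))
        (FreeAlgebra.ι k (Sum.inl (sigmaB k F m i b)) * FreeAlgebra.ι k (Sum.inr i)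
          + FreeAlgebra.ι k (Sum.inl (ρf i b)))

section QWPdefs
variable [Field k] [Ring F] [Algebra k F]
variable (Δf : Fin 2 → Fin 2 → F ⊗[k] F) (Rv : F ⊗[k] F)
variable (ρf : Fin (m + 1) → BD k F m →ₗ[k] BD k F m)

/-- The quantum wreath product of polynomial type, presented by generators and
relations. -/
abbrev QWP := RingQuot (QRel k F m Δf Rv ρf)

/-- The canonical map `B^{⊗d} → B ≀ H(d)`. -/
noncomputable def embB (b : BD k F m) : QWP k F m Δf Rv ρf :=
  RingQuot.mkAlgHom k (QRel k F m Δf Rv ρf) (FreeAlgebra.ι k (Sum.inl b))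

/-- The Hecke-like generator `H_i ∈ B ≀ H(d)`. -/
noncomputable def genH (i : Fin (m + 1)) : QWP k F m Δf Rv ρf :=
  RingQuot.mkAlgHom k (QRel k F m Δf Rv ρf) (FreeAlgebra.ι k (Sum.inr i))

/-- The simple transposition `s_i = (i, i+1) ∈ S_d`, `d = m+2`. -/
def swPerm (i : Fin (m + 1)) : Equiv.Perm (Fin (m + 2)) :=
  Equiv.swap i.castSucc i.succ

/-- The number of inversions (Coxeter length) of a permutation. -/
noncomputable def invCount (w : Equiv.Perm (Fin (m + 2))) : ℕ :=
  (Finset.univ.filter fun p : Fin (m + 2) × Fin (m + 2) =>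
    p.1 < p.2 ∧ w p.2 < w p.1).card

/-- `L` is a reduced expression for `w`. -/
def IsReducedWord (L : List (Fin (m + 1))) (w : Equiv.Perm (Fin (m + 2))) : Prop :=
  (L.map (swPerm m)).prod = w ∧ L.length = invCount m w

end QWPdefs

section Combinatorics

theorem invCount_asc (i : Fin (m + 1)) (u : Equiv.Perm (Fin (m + 2)))
    (h : u⁻¹ i.castSucc < u⁻¹ i.succ) :
    invCount m (swPerm m i * u) = invCount m u + 1 := by
  classical
  unfold invCount
  have hmem : (u⁻¹ i.castSucc, u⁻¹ i.succ) ∉ (Finset.univ.filter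
      fun p : Fin (m + 2) × Fin (m + 2) => p.1 < p.2 ∧ u p.2 < u p.1) := by
    intro hm
    have h2 := (Finset.mem_filter.1 hm).2.2
    have e1 : ∀ x, u (u⁻¹ x) = x := fun x => u.apply_symm_apply x
    rw [e1, e1] at h2
    exact absurd h2 (by simp [Fin.le_def])
  rw [← Finset.card_insert_of_notMem hmem]
  congr 1
  ext ⟨a, b⟩
  rw [Finset.mem_insert, Finset.mem_filter, Finset.mem_filter]
  simp only [Finset.mem_univ, true_and, Prod.mk.injEq,
    Equiv.Perm.mul_apply, swPerm, Equiv.Perm.eq_inv_iff_eq]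
  have key : ∀ c d : Fin (m + 2), c ≠ d →
      ((Equiv.swap i.castSucc i.succ) d < (Equiv.swap i.castSucc i.succ) c ↔
      (d < c ∧ ¬ (d = i.castSucc ∧ c = i.succ)) ∨ (c = i.castSucc ∧ d = i.succ)) := by
    intro c d hcd
    simp only [Equiv.swap_apply_def]
    rw [Ne, Fin.ext_iff] at hcd
    split_ifs <;> simp only [Fin.lt_def, Fin.ext_iff, Fin.val_castSucc, Fin.val_succ] at * <;> omega
  constructor
  · rintro ⟨hab, h2⟩
    have hne : u a ≠ u b := fun e => hab.ne (u.injective e)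
    rw [key _ _ hne] at h2
    rcases h2 with h2 | h2
    · exact Or.inr ⟨hab, h2.1⟩
    · exact Or.inl h2
  · rintro (⟨ha, hb⟩ | ⟨hab, h2⟩)
    · have ha' : a = u⁻¹ i.castSucc := by rw [← ha]; simp
      have hb' : b = u⁻¹ i.succ := by rw [← hb]; simp
      refine ⟨by rw [ha', hb']; exact h, ?_⟩
      rw [ha, hb, Equiv.swap_apply_left, Equiv.swap_apply_right]
      exact Fin.castSucc_lt_succ
    · have hne : u a ≠ u b := fun e => hab.ne (u.injective e)
      refine ⟨hab, (key _ _ hne).2 (Or.inl ⟨h2, ?_⟩)⟩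
      rintro ⟨hb, ha⟩
      have ha' : a = u⁻¹ i.succ := by rw [← ha]; simp
      have hb' : b = u⁻¹ i.castSucc := by rw [← hb]; simp
      rw [ha', hb'] at hab
      exact absurd h hab.not_gt

theorem swPerm_mul_self (i : Fin (m + 1)) : swPerm m i * swPerm m i = 1 := by
  simp [swPerm]

theorem swPerm_inv (i : Fin (m + 1)) : (swPerm m i)⁻¹ = swPerm m i := by
  simp [swPerm]

theorem invCount_desc (i : Fin (m + 1)) (u : Equiv.Perm (Fin (m + 2)))
    (h : u⁻¹ i.succ < u⁻¹ i.castSucc) :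
    invCount m u = invCount m (swPerm m i * u) + 1 := by
  have := invCount_asc m i (swPerm m i * u) (by
    simp only [mul_inv_rev, Equiv.Perm.mul_apply, swPerm_inv]
    simpa [swPerm] using h)
  rwa [← mul_assoc, swPerm_mul_self, one_mul] at this

theorem asc_or_desc (i : Fin (m + 1)) (u : Equiv.Perm (Fin (m + 2))) :
    u⁻¹ i.castSucc < u⁻¹ i.succ ∨ u⁻¹ i.succ < u⁻¹ i.castSucc := by
  rcases lt_trichotomy (u⁻¹ i.castSucc) (u⁻¹ i.succ) with h | h | h
  · exact Or.inl h
  · exact absurd (u⁻¹.injective h) (by simp [Fin.ext_iff])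
  · exact Or.inr h

theorem invCount_le (i : Fin (m + 1)) (u : Equiv.Perm (Fin (m + 2))) :
    invCount m (swPerm m i * u) ≤ invCount m u + 1 := by
  rcases asc_or_desc m i u with h | h
  · rw [invCount_asc m i u h]
  · have := invCount_desc m i u h
    omega

theorem invCount_one : invCount m 1 = 0 := by
  unfold invCount
  rw [Finset.card_eq_zero, Finset.filter_eq_empty_iff]
  rintro ⟨a, b⟩ -
  simp only [Equiv.Perm.one_apply, not_and, not_lt]
  exact fun h => h.le

theorem invCount_inv (w : Equiv.Perm (Fin (m + 2))) : invCount m w⁻¹ = invCount m w := by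
  unfold invCount
  refine Finset.card_bij (fun p _ => (w⁻¹ p.2, w⁻¹ p.1)) ?_ ?_ ?_
  · rintro ⟨a, b⟩ h
    simp only [Finset.mem_filter, Finset.mem_univ, true_and] at h
    simp only [Finset.mem_filter, Finset.mem_univ, true_and]
    have e1 : ∀ x, w (w⁻¹ x) = x := fun x => w.apply_symm_apply x
    rw [e1, e1]
    exact ⟨h.2, h.1⟩
  · rintro ⟨a, b⟩ _ ⟨c, d⟩ _ h
    simp only [Prod.mk.injEq, EmbeddingLike.apply_eq_iff_eq] at h
    simp [h.1, h.2]
  · rintro ⟨a, b⟩ h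
    simp only [Finset.mem_filter, Finset.mem_univ, true_and] at h
    exact ⟨(w b, w a), by simp [h.1, h.2], by simp⟩

theorem swPerm_prod_le (L : List (Fin (m + 1))) :
    invCount m (L.map (swPerm m)).prod ≤ L.length := by
  induction L with
  | nil => simp [invCount_one]
  | cons i L ih =>
    simp only [List.map_cons, List.prod_cons, List.length_cons]
    exact (invCount_le m i _).trans (by omega)

theorem isReducedWord_nil : IsReducedWord m [] 1 := by
  simp [IsReducedWord, invCount_one]

theorem isReducedWord_cons {i : Fin (m + 1)} {L : List (Fin (m + 1))}
    {u : Equiv.Perm (Fin (m + 2))} (hL : IsReducedWord m L u)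
    (h : invCount m (swPerm m i * u) = invCount m u + 1) :
    IsReducedWord m (i :: L) (swPerm m i * u) := by
  obtain ⟨h1, h2⟩ := hL
  exact ⟨by simp [h1], by simp [h2, h]⟩

theorem isReducedWord_snoc {i : Fin (m + 1)} {L : List (Fin (m + 1))}
    {u : Equiv.Perm (Fin (m + 2))} (hL : IsReducedWord m L u)
    (h : invCount m (u * swPerm m i) = invCount m u + 1) :
    IsReducedWord m (L ++ [i]) (u * swPerm m i) := by
  obtain ⟨h1, h2⟩ := hL
  exact ⟨by simp [h1], by simp [h2, h]⟩

theorem isReducedWord_tail {i : Fin (m + 1)} {L : List (Fin (m + 1))}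
    {w : Equiv.Perm (Fin (m + 2))} (hL : IsReducedWord m (i :: L) w) :
    IsReducedWord m L (swPerm m i * w) ∧ invCount m w = invCount m (swPerm m i * w) + 1 := by
  obtain ⟨h1, h2⟩ := hL
  simp only [List.map_cons, List.prod_cons, List.length_cons] at h1 h2
  have h3 : (L.map (swPerm m)).prod = swPerm m i * w := by
    rw [← h1, ← mul_assoc, swPerm_mul_self, one_mul]
  have h4 := swPerm_prod_le m L
  rw [h3] at h4
  have h5 := invCount_le m i (swPerm m i * w)
  rw [← mul_assoc, swPerm_mul_self, one_mul] at h5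
  exact ⟨⟨h3, by omega⟩, by omega⟩

theorem exists_desc (w : Equiv.Perm (Fin (m + 2))) (hw : w ≠ 1) :
    ∃ i : Fin (m + 1), w⁻¹ i.succ < w⁻¹ i.castSucc := by
  by_contra hcon
  push Not at hcon
  apply hw
  have hmono : StrictMono (w⁻¹ : Equiv.Perm (Fin (m + 2))) := by
    rw [Fin.strictMono_iff_lt_succ]
    intro i
    rcases asc_or_desc m i w with h | h
    · exact h
    · exact absurd h (hcon i).not_gt
  have h1 : (w⁻¹ : Equiv.Perm (Fin (m + 2))) = 1 := by
    have : (hmono.orderIsoOfSurjective _ (w⁻¹).surjective) = OrderIso.refl _ :=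
      Subsingleton.elim _ _
    ext x
    have h2 := congrArg (fun e : Fin (m + 2) ≃o Fin (m + 2) => e x) this
    simpa using congrArg Fin.val h2
  simpa using h1

theorem exists_reducedWord (w : Equiv.Perm (Fin (m + 2))) : ∃ L, IsReducedWord m L w := by
  generalize hn : invCount m w = n
  induction n generalizing w with
  | zero =>
    by_cases hw : w = 1
    · exact ⟨[], hw ▸ isReducedWord_nil m⟩
    · obtain ⟨i, hi⟩ := exists_desc m w hw
      have := invCount_desc m i w hi
      omega
  | succ n ih =>
    have hw : w ≠ 1 := by
      rintro rfl
      rw [invCount_one] at hn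
      omega
    obtain ⟨i, hi⟩ := exists_desc m w hw
    have h1 := invCount_desc m i w hi
    obtain ⟨L, hL⟩ := ih (swPerm m i * w) (by omega)
    have h2 := isReducedWord_cons m (i := i) hL
    rw [← mul_assoc, swPerm_mul_self, one_mul] at h2
    exact ⟨_, h2 h1⟩

theorem invCount_right (i : Fin (m + 1)) (u : Equiv.Perm (Fin (m + 2))) :
    invCount m (u * swPerm m i) = invCount m u + 1 ∨
    invCount m u = invCount m (u * swPerm m i) + 1 := by
  have e : invCount m (u * swPerm m i) = invCount m (swPerm m i * u⁻¹) := by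
    rw [← invCount_inv, mul_inv_rev, swPerm_inv]
  rw [e, ← invCount_inv m u]
  rcases asc_or_desc m i u⁻¹ with h | h
  · exact Or.inl (invCount_asc m i _ h)
  · exact Or.inr (invCount_desc m i _ h)

theorem invCount_left (i : Fin (m + 1)) (u : Equiv.Perm (Fin (m + 2))) :
    invCount m (swPerm m i * u) = invCount m u + 1 ∨
    invCount m u = invCount m (swPerm m i * u) + 1 := by
  rcases asc_or_desc m i u with h | h
  · exact Or.inl (invCount_asc m i _ h)
  · exact Or.inr (invCount_desc m i _ h)

end Combinatorics

section Spanning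
variable [Field k] [Ring F] [Algebra k F]
variable (Δf : Fin 2 → Fin 2 → F ⊗[k] F) (Rv : F ⊗[k] F)
variable (ρf : Fin (m + 1) → BD k F m →ₗ[k] BD k F m)

/-- The canonical map `B^{⊗d} → B ≀ H(d)` as a linear map. -/
noncomputable def embL : BD k F m →ₗ[k] QWP k F m Δf Rv ρf where
  toFun := embB k F m Δf Rv ρf
  map_add' a b := by
    unfold embB
    rw [← map_add]
    exact (RingQuot.mkAlgHom_rel k (QRel.add_gen a b)).symm
  map_smul' c a := by
    unfold embB
    rw [RingHom.id_apply, ← map_smul]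
    exact (RingQuot.mkAlgHom_rel k (QRel.smul_gen c a)).symm

theorem embB_mul (a b : BD k F m) : embB k F m Δf Rv ρf (a * b) =
    embB k F m Δf Rv ρf a * embB k F m Δf Rv ρf b := by
  unfold embB
  rw [← map_mul]
  exact (RingQuot.mkAlgHom_rel k (QRel.mul_gen a b)).symm

theorem embB_one : embB k F m Δf Rv ρf 1 = 1 := by
  unfold embB
  rw [← map_one (RingQuot.mkAlgHom k (QRel k F m Δf Rv ρf))]
  exact (RingQuot.mkAlgHom_rel k QRel.one_gen)

theorem genH_mul_embB (i : Fin (m + 1)) (b : BD k F m) :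
    genH k F m Δf Rv ρf i * embB k F m Δf Rv ρf b =
      embB k F m Δf Rv ρf (sigmaB k F m i b) * genH k F m Δf Rv ρf i
        + embB k F m Δf Rv ρf (ρf i b) := by
  unfold embB genH
  rw [← map_mul, ← map_mul, ← map_add]
  exact (RingQuot.mkAlgHom_rel k (QRel.wreath i b))

theorem genH_sq (i : Fin (m + 1)) :
    genH k F m Δf Rv ρf i * genH k F m Δf Rv ρf i =
      embB k F m Δf Rv ρf (SI k F m Δf i) * genH k F m Δf Rv ρf i
        + embB k F m Δf Rv ρf (RI k F m Rv i) := by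
  unfold embB genH
  rw [← map_mul, ← map_mul, ← map_add]
  exact (RingQuot.mkAlgHom_rel k (QRel.quad i))

theorem sigmaB_sigmaB (i : Fin (m + 1)) (b : BD k F m) :
    sigmaB k F m i (sigmaB k F m i b) = b := by
  induction b using TensorProduct.induction_on with
  | zero => simp
  | add x y hx hy => rw [map_add, map_add, hx, hy]
  | tmul t p =>
    simp only [sigmaB, sigmaT, TensorProduct.map_tmul, AlgHom.toLinearMap_apply, rename_rename]
    congr 1
    · erw [PiTensorProduct.reindex_reindex]
      have : (Equiv.swap i.castSucc i.succ).trans (Equiv.swap i.castSucc i.succ)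
          = Equiv.refl _ := by ext; simp
      rw [this, PiTensorProduct.reindex_refl]
      rfl
    · have : (⇑(Equiv.swap i.castSucc i.succ) ∘ ⇑(Equiv.swap i.castSucc i.succ)) = id := by
        ext; simp
      rw [this, rename_id_apply]

theorem embB_mul_genH (i : Fin (m + 1)) (b : BD k F m) :
    embB k F m Δf Rv ρf b * genH k F m Δf Rv ρf i =
      genH k F m Δf Rv ρf i * embB k F m Δf Rv ρf (sigmaB k F m i b)
        - embB k F m Δf Rv ρf (ρf i (sigmaB k F m i b)) := by
  rw [genH_mul_embB, sigmaB_sigmaB, add_sub_cancel_right]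

theorem QWP_induction (p : QWP k F m Δf Rv ρf → Prop)
    (hk : ∀ c : k, p (algebraMap k _ c))
    (hb : ∀ b, p (embB k F m Δf Rv ρf b)) (hh : ∀ i, p (genH k F m Δf Rv ρf i))
    (hadd : ∀ x y, p x → p y → p (x + y)) (hmul : ∀ x y, p x → p y → p (x * y)) :
    ∀ x, p x := by
  intro x
  obtain ⟨z, rfl⟩ := RingQuot.mkAlgHom_surjective k (QRel k F m Δf Rv ρf) x
  induction z with
  | grade0 c => rw [AlgHom.commutes]; exact hk c
  | grade1 s =>
    rcases s with b | i
    · exact hb b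
    · exact hh i
  | mul a b ha hb => rw [map_mul]; exact hmul _ _ ha hb
  | add a b ha hb => rw [map_add]; exact hadd _ _ ha hb

variable (HwF : Equiv.Perm (Fin (m + 2)) → QWP k F m Δf Rv ρf)
    (hHw : ∀ w L, IsReducedWord m L w →
      HwF w = (L.map (genH k F m Δf Rv ρf)).prod)

theorem HwF_one
    (hHw : ∀ w L, IsReducedWord m L w →
      HwF w = (L.map (genH k F m Δf Rv ρf)).prod) : HwF 1 = 1 := by
  rw [hHw 1 [] (isReducedWord_nil m)]; rfl

theorem HwF_left
    (hHw : ∀ w L, IsReducedWord m L w →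
      HwF w = (L.map (genH k F m Δf Rv ρf)).prod) (i : Fin (m + 1)) (w : Equiv.Perm (Fin (m + 2)))
    (h : invCount m (swPerm m i * w) = invCount m w + 1) :
    HwF (swPerm m i * w) = genH k F m Δf Rv ρf i * HwF w := by
  obtain ⟨L, hL⟩ := exists_reducedWord m w
  rw [hHw _ _ hL, hHw _ _ (isReducedWord_cons m hL h)]
  simp

theorem HwF_right
    (hHw : ∀ w L, IsReducedWord m L w →
      HwF w = (L.map (genH k F m Δf Rv ρf)).prod) (i : Fin (m + 1)) (w : Equiv.Perm (Fin (m + 2)))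
    (h : invCount m (w * swPerm m i) = invCount m w + 1) :
    HwF (w * swPerm m i) = HwF w * genH k F m Δf Rv ρf i := by
  obtain ⟨L, hL⟩ := exists_reducedWord m w
  rw [hHw _ _ hL, hHw _ _ (isReducedWord_snoc m hL h)]
  simp

/-- The map `b ⊗ w ↦ b·H_w` as a linear map. -/
noncomputable def pbwL : (Equiv.Perm (Fin (m + 2)) →₀ BD k F m) →ₗ[k] QWP k F m Δf Rv ρf :=
  Finsupp.lsum k (fun w => (LinearMap.mulRight k (HwF w)).comp (embL k F m Δf Rv ρf))

/-- The map `b ⊗ w ↦ H_w·b` as a linear map. -/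
noncomputable def pbwR : (Equiv.Perm (Fin (m + 2)) →₀ BD k F m) →ₗ[k] QWP k F m Δf Rv ρf :=
  Finsupp.lsum k (fun w => (LinearMap.mulLeft k (HwF w)).comp (embL k F m Δf Rv ρf))

theorem pbwL_single (w : Equiv.Perm (Fin (m + 2))) (b : BD k F m) :
    pbwL k F m Δf Rv ρf HwF (Finsupp.single w b) = embB k F m Δf Rv ρf b * HwF w := by
  simp only [pbwL, Finsupp.lsum_single]
  rfl

theorem pbwR_single (w : Equiv.Perm (Fin (m + 2))) (b : BD k F m) :
    pbwR k F m Δf Rv ρf HwF (Finsupp.single w b) = HwF w * embB k F m Δf Rv ρf b := by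
  simp only [pbwR, Finsupp.lsum_single]
  rfl

theorem memL (w : Equiv.Perm (Fin (m + 2))) (b : BD k F m) :
    embB k F m Δf Rv ρf b * HwF w ∈ LinearMap.range (pbwL k F m Δf Rv ρf HwF) :=
  ⟨_, pbwL_single k F m Δf Rv ρf HwF w b⟩

theorem memR (w : Equiv.Perm (Fin (m + 2))) (b : BD k F m) :
    HwF w * embB k F m Δf Rv ρf b ∈ LinearMap.range (pbwR k F m Δf Rv ρf HwF) :=
  ⟨_, pbwR_single k F m Δf Rv ρf HwF w b⟩

theorem pbwL_surj
    (hHw : ∀ w L, IsReducedWord m L w →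
      HwF w = (L.map (genH k F m Δf Rv ρf)).prod) : Function.Surjective (pbwL k F m Δf Rv ρf HwF) := by
  set N := LinearMap.range (pbwL k F m Δf Rv ρf HwF) with hN
  have hH : ∀ i w, genH k F m Δf Rv ρf i * HwF w ∈ N := by
    intro i w
    rcases invCount_left m i w with h | h
    · rw [← HwF_left k F m Δf Rv ρf HwF hHw i w h]
      have := memL k F m Δf Rv ρf HwF (swPerm m i * w) 1
      rwa [embB_one, one_mul] at this
    · have e : swPerm m i * (swPerm m i * w) = w := by
        rw [← mul_assoc, swPerm_mul_self, one_mul]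
      have h2 := HwF_left k F m Δf Rv ρf HwF hHw i (swPerm m i * w) (by rw [e]; exact h)
      rw [e] at h2
      have e3 : genH k F m Δf Rv ρf i * HwF w =
          embB k F m Δf Rv ρf (SI k F m Δf i) * HwF w
            + embB k F m Δf Rv ρf (RI k F m Rv i) * HwF (swPerm m i * w) := by
        rw [h2, ← mul_assoc, genH_sq, add_mul, mul_assoc]
      rw [e3]
      exact N.add_mem (memL ..) (memL ..)
  have hB : ∀ b, ∀ y ∈ N, embB k F m Δf Rv ρf b * y ∈ N := by
    rintro b _ ⟨f, rfl⟩
    induction f using Finsupp.induction_linear with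
    | zero => simp
    | add f g hf hg => rw [map_add, mul_add]; exact N.add_mem hf hg
    | single w c =>
      rw [pbwL_single, ← mul_assoc, ← embB_mul]
      exact memL ..
  have key : ∀ x, ∀ y ∈ N, x * y ∈ N := by
    apply QWP_induction
    · intro c y hy
      rw [← Algebra.smul_def]
      exact N.smul_mem _ hy
    · exact hB
    · rintro i _ ⟨f, rfl⟩
      induction f using Finsupp.induction_linear with
      | zero => simp
      | add f g hf hg => rw [map_add, mul_add]; exact N.add_mem hf hg
      | single w c =>
        rw [pbwL_single, ← mul_assoc, genH_mul_embB, add_mul, mul_assoc]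
        exact N.add_mem (hB _ _ (hH i w)) (memL ..)
    · intro x y hx hy z hz
      rw [add_mul]
      exact N.add_mem (hx z hz) (hy z hz)
    · intro x y hx hy z hz
      rw [mul_assoc]
      exact hx _ (hy z hz)
  intro x
  have h1 : (1 : QWP k F m Δf Rv ρf) ∈ N := by
    have := memL k F m Δf Rv ρf HwF 1 1
    rwa [embB_one, one_mul, HwF_one k F m Δf Rv ρf HwF hHw] at this
  have := key x 1 h1
  rwa [mul_one] at this

theorem pbwR_surj
    (hHw : ∀ w L, IsReducedWord m L w →
      HwF w = (L.map (genH k F m Δf Rv ρf)).prod) : Function.Surjective (pbwR k F m Δf Rv ρf HwF) := by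
  set N := LinearMap.range (pbwR k F m Δf Rv ρf HwF) with hN
  have hB : ∀ b, ∀ y ∈ N, y * embB k F m Δf Rv ρf b ∈ N := by
    rintro b _ ⟨f, rfl⟩
    induction f using Finsupp.induction_linear with
    | zero => simp
    | add f g hf hg => rw [map_add, add_mul]; exact N.add_mem hf hg
    | single w c =>
      rw [pbwR_single, mul_assoc, ← embB_mul]
      exact memR ..
  have hH : ∀ i w, HwF w * genH k F m Δf Rv ρf i ∈ N := by
    intro i w
    rcases invCount_right m i w with h | h
    · rw [← HwF_right k F m Δf Rv ρf HwF hHw i w h]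
      have := memR k F m Δf Rv ρf HwF (w * swPerm m i) 1
      rwa [embB_one, mul_one] at this
    · have e : (w * swPerm m i) * swPerm m i = w := by
        rw [mul_assoc, swPerm_mul_self, mul_one]
      have h2 := HwF_right k F m Δf Rv ρf HwF hHw i (w * swPerm m i) (by rw [e]; exact h)
      rw [e] at h2
      have e3 : HwF w * genH k F m Δf Rv ρf i =
          HwF w * embB k F m Δf Rv ρf (sigmaB k F m i (SI k F m Δf i))
            - HwF (w * swPerm m i) * embB k F m Δf Rv ρf (ρf i (sigmaB k F m i (SI k F m Δf i)))
            + HwF (w * swPerm m i) * embB k F m Δf Rv ρf (RI k F m Rv i) := by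
        rw [h2, mul_assoc, genH_sq, embB_mul_genH, mul_add, mul_sub, mul_assoc]
      rw [e3]
      exact N.add_mem (N.sub_mem (memR ..) (memR ..)) (memR ..)
  have key : ∀ x, ∀ y ∈ N, y * x ∈ N := by
    apply QWP_induction
    · intro c y hy
      rw [← Algebra.commutes, ← Algebra.smul_def]
      exact N.smul_mem _ hy
    · exact hB
    · rintro i _ ⟨f, rfl⟩
      induction f using Finsupp.induction_linear with
      | zero => simp
      | add f g hf hg => rw [map_add, add_mul]; exact N.add_mem hf hg
      | single w c =>
        rw [pbwR_single, mul_assoc, embB_mul_genH, mul_sub, ← mul_assoc]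
        exact N.sub_mem (hB _ _ (hH i w)) (memR ..)
    · intro x y hx hy z hz
      rw [mul_add]
      exact N.add_mem (hx z hz) (hy z hz)
    · intro x y hx hy z hz
      rw [← mul_assoc]
      exact hy _ (hx z hz)
  intro x
  have h1 : (1 : QWP k F m Δf Rv ρf) ∈ N := by
    have := memR k F m Δf Rv ρf HwF 1 1
    rwa [embB_one, mul_one, HwF_one k F m Δf Rv ρf HwF hHw] at this
  have := key x 1 h1
  rwa [one_mul] at this

end Spanning

section AbstractOperators

variable {κ A I : Type*} [CommRing κ] [Ring A] [Algebra κ A] [DecidableEq I]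

/-- The operator `x ↦ G_{ij} x + K_{ij} τ_{(ij)}(x)`. -/
noncomputable def hop (τ : Equiv.Perm I →* (A →ₐ[κ] A)) (G K : I → I → A) (i j : I) :
    Module.End κ A :=
  LinearMap.mulLeft κ (G i j) + (LinearMap.mulLeft κ (K i j)).comp (τ (Equiv.swap i j)).toLinearMap

theorem hop_apply (τ : Equiv.Perm I →* (A →ₐ[κ] A)) (G K : I → I → A) (i j : I) (x : A) :
    hop τ G K i j x = G i j * x + K i j * τ (Equiv.swap i j) x := rfl

theorem hop_braid_aux (Gab Gba Gbc Gcb Gac Kab Kba Kbc Kcb Kac x sa sb sab sba s : A)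
    (hKab : ∀ y, Kab * y = y * Kab) (hKbc : ∀ y, Kbc * y = y * Kbc)
    (hKac : ∀ y, Kac * y = y * Kac)
    (h1 : Gac * Gba + Gab * Gbc = Gbc * Gac)
    (h2 : Gab * Gac = Gac * Gcb + Gbc * Gab)
    (h3 : Gab * Gbc * Gab + Gac * (Kab * Kba) = Gbc * Gab * Gbc + Gac * (Kbc * Kcb)) :
    Gab * (Gbc * (Gab * x + Kab * sa) + Kbc * (Gac * sb + Kac * sba))
      + Kab * (Gac * (Gba * sa + Kba * x) + Kac * (Gbc * sab + Kbc * s)) =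
    Gbc * (Gab * (Gbc * x + Kbc * sb) + Kab * (Gac * sa + Kac * sab))
      + Kbc * (Gac * (Gcb * sb + Kcb * x) + Kac * (Gab * sba + Kab * s)) := by
  have e1 : Gab * Kbc = Kbc * Gab := (hKbc _).symm
  have e2 : Gbc * Kab = Kab * Gbc := (hKab _).symm
  have lhs : Gab * (Gbc * (Gab * x + Kab * sa) + Kbc * (Gac * sb + Kac * sba))
      + Kab * (Gac * (Gba * sa + Kba * x) + Kac * (Gbc * sab + Kbc * s)) =
      (Gab * Gbc * Gab + Gac * (Kab * Kba)) * x + Kab * (Gac * Gba + Gab * Gbc) * sa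
      + Kbc * (Gab * Gac) * sb + Gab * Kbc * Kac * sba + Kab * Kac * Gbc * sab
      + Kab * Kac * Kbc * s := by
    have e3 : Gab * (Gbc * (Kab * sa)) = Kab * (Gab * (Gbc * sa)) := by
      rw [← mul_assoc Gbc, e2, mul_assoc, ← mul_assoc Gab, ← hKab Gab, mul_assoc]
    have e4 : Gab * (Kbc * (Gac * sb)) = Kbc * (Gab * (Gac * sb)) := by
      rw [← mul_assoc, e1, mul_assoc]
    have e5 : Kab * (Gac * (Kba * x)) = Gac * (Kab * (Kba * x)) := by
      rw [← mul_assoc, hKab, mul_assoc]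
    simp only [mul_add, add_mul, mul_assoc, e3, e4, e5]
    abel
  have rhs : Gbc * (Gab * (Gbc * x + Kbc * sb) + Kab * (Gac * sa + Kac * sab))
      + Kbc * (Gac * (Gcb * sb + Kcb * x) + Kac * (Gab * sba + Kab * s)) =
      (Gbc * Gab * Gbc + Gac * (Kbc * Kcb)) * x + Kab * (Gbc * Gac) * sa
      + Kbc * (Gac * Gcb + Gbc * Gab) * sb + Kbc * Kac * Gab * sba + Gbc * Kab * Kac * sab
      + Kbc * Kac * Kab * s := by
    have e3 : Gbc * (Gab * (Kbc * sb)) = Kbc * (Gbc * (Gab * sb)) := by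
      rw [← mul_assoc Gab, e1, mul_assoc, ← mul_assoc Gbc, ← hKbc Gbc, mul_assoc]
    have e4 : Gbc * (Kab * (Gac * sa)) = Kab * (Gbc * (Gac * sa)) := by
      rw [← mul_assoc, e2, mul_assoc]
    have e5 : Kbc * (Gac * (Kcb * x)) = Gac * (Kbc * (Kcb * x)) := by
      rw [← mul_assoc, hKbc, mul_assoc]
    simp only [mul_add, add_mul, mul_assoc, e3, e4, e5]
    abel
  rw [lhs, rhs, h1, h2, h3]
  have f1 : Gab * Kbc * Kac = Kbc * Kac * Gab := by rw [e1, mul_assoc, ← hKac, mul_assoc]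
  have f2 : Gbc * Kab * Kac = Kab * Kac * Gbc := by rw [e2, mul_assoc, ← hKac, mul_assoc]
  have f3 : Kbc * Kac * Kab = Kab * Kac * Kbc := by
    rw [← hKab, hKbc, mul_assoc]
  rw [f1, f2, f3]

variable (τ : Equiv.Perm I →* (A →ₐ[κ] A)) (G K : I → I → A)

theorem hop_braid
    (hG : ∀ w i j, τ w (G i j) = G (w i) (w j))
    (hK : ∀ w i j, τ w (K i j) = K (w i) (w j))
    (hKc : ∀ i j y, K i j * y = y * K i j) {a b c : I} (hab : a ≠ b) (hbc : b ≠ c) (hac : a ≠ c)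
    (h1 : G a c * G b a + G a b * G b c = G b c * G a c)
    (h2 : G a b * G a c = G a c * G c b + G b c * G a b)
    (h3 : G a b * G b c * G a b + G a c * (K a b * K b a) =
      G b c * G a b * G b c + G a c * (K b c * K c b)) :
    hop τ G K a b * hop τ G K b c * hop τ G K a b =
    hop τ G K b c * hop τ G K a b * hop τ G K b c := by
  ext x
  have s1 : Equiv.swap a b a = b := by simp
  have s2 : Equiv.swap a b b = a := by simp
  have s3 : Equiv.swap a b c = c := Equiv.swap_apply_of_ne_of_ne hac.symm hbc.symm
  have s4 : Equiv.swap b c b = c := by simp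
  have s5 : Equiv.swap b c c = b := by simp
  have s6 : Equiv.swap b c a = a := Equiv.swap_apply_of_ne_of_ne hab hac
  have t1 : ∀ (w : Equiv.Perm I) (i : I) (y : A), w * w = 1 → τ w (τ w y) = y := by
    intro w i y hw
    rw [← AlgHom.mul_apply, ← map_mul, hw, map_one]; rfl
  have t2 : τ (Equiv.swap a b) (τ (Equiv.swap b c) (τ (Equiv.swap a b) x)) =
      τ (Equiv.swap b c) (τ (Equiv.swap a b) (τ (Equiv.swap b c) x)) := by
    simp only [← AlgHom.mul_apply, ← map_mul]
    have e1 := Equiv.swap_mul_swap_mul_swap hbc.symm hac.symm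
    have e2 := Equiv.swap_mul_swap_mul_swap hab hac
    rw [Equiv.swap_comm b a, Equiv.swap_comm c b, Equiv.swap_comm a c] at e1
    congr 2
    rw [← mul_assoc, ← mul_assoc, e1, e2]
  simp only [Module.End.mul_apply, hop_apply, map_add, map_mul, hG, hK, s1, s2, s3, s4, s5, s6,
    t1 _ a _ (Equiv.swap_mul_self _ _)]
  rw [t2]
  have key := hop_braid_aux _ _ _ _ _ _ _ _ _ _ x (τ (Equiv.swap a b) x) (τ (Equiv.swap b c) x)
    (τ (Equiv.swap a b) (τ (Equiv.swap b c) x)) (τ (Equiv.swap b c) (τ (Equiv.swap a b) x))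
    (τ (Equiv.swap b c) (τ (Equiv.swap a b) (τ (Equiv.swap b c) x)))
    (hKc _ _) (hKc _ _) (hKc a c) h1 h2 h3
  refine Eq.trans ?_ (Eq.trans key ?_) <;> simp only [mul_add] <;> abel

theorem hop_far
    (hG : ∀ w i j, τ w (G i j) = G (w i) (w j))
    (hK : ∀ w i j, τ w (K i j) = K (w i) (w j))
    (hKc : ∀ i j y, K i j * y = y * K i j) {a b c d : I} (hac : a ≠ c) (had : a ≠ d) (hbc : b ≠ c) (hbd : b ≠ d)
    (h : G a b * G c d = G c d * G a b) :
    hop τ G K a b * hop τ G K c d = hop τ G K c d * hop τ G K a b := by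
  ext x
  have s1 : Equiv.swap a b c = c := Equiv.swap_apply_of_ne_of_ne hac.symm hbc.symm
  have s2 : Equiv.swap a b d = d := Equiv.swap_apply_of_ne_of_ne had.symm hbd.symm
  have s3 : Equiv.swap c d a = a := Equiv.swap_apply_of_ne_of_ne hac had
  have s4 : Equiv.swap c d b = b := Equiv.swap_apply_of_ne_of_ne hbc hbd
  have t2 : τ (Equiv.swap a b) (τ (Equiv.swap c d) x) =
      τ (Equiv.swap c d) (τ (Equiv.swap a b) x) := by
    simp only [← AlgHom.mul_apply, ← map_mul]
    congr 2
    rw [Equiv.mul_swap_eq_swap_mul, s1, s2]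
  simp only [Module.End.mul_apply, hop_apply, map_add, map_mul, hG, hK, s1, s2, s3, s4, t2,
    ← mul_assoc, h]
  rw [← hKc c d (G a b), ← hKc a b (G c d), ← hKc a b (K c d)]
  abel

theorem hop_quad
    (hG : ∀ w i j, τ w (G i j) = G (w i) (w j))
    (hK : ∀ w i j, τ w (K i j) = K (w i) (w j)) {a b : I} (S R : A) (h1 : G a b + G b a = S)
    (h2 : K a b * K b a = R + G a b * G b a) (h3 : G a b * G b a = G b a * G a b)
    (hKc : ∀ i j y, K i j * y = y * K i j) :
    hop τ G K a b * hop τ G K a b = LinearMap.mulLeft κ S * hop τ G K a b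
      + LinearMap.mulLeft κ R := by
  ext x
  have t1 : τ (Equiv.swap a b) (τ (Equiv.swap a b) x) = x := by
    rw [← AlgHom.mul_apply, ← map_mul, Equiv.swap_mul_self, map_one]; rfl
  simp only [Module.End.mul_apply, hop_apply, map_add, map_mul, hG, hK, LinearMap.add_apply,
    LinearMap.mulLeft_apply, Equiv.swap_apply_left, Equiv.swap_apply_right, t1, ← h1,
    ← mul_assoc, h2, add_mul, h3, hKc a b (G b a)]
  abel

theorem hop_wreath {a b : I} (y z : A) (h : G a b * y = τ (Equiv.swap a b) y * G a b + z)
    (hKc : ∀ i j y, K i j * y = y * K i j) :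
    hop τ G K a b * LinearMap.mulLeft κ y =
      LinearMap.mulLeft κ (τ (Equiv.swap a b) y) * hop τ G K a b + LinearMap.mulLeft κ z := by
  ext x
  simp only [Module.End.mul_apply, hop_apply, map_mul, LinearMap.add_apply,
    LinearMap.mulLeft_apply, mul_add, ← mul_assoc, h, add_mul, hKc]
  abel

end AbstractOperators

section PiModel

variable {κ A : Type*} [CommRing κ] [Ring A] [Algebra κ A] {n : ℕ}

/-- The diagonal action of permutations on `A`-valued functions on the symmetric group. -/
noncomputable def piTau (τ : Equiv.Perm (Fin n) →* (A →ₐ[κ] A)) :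
    Equiv.Perm (Fin n) →* ((Equiv.Perm (Fin n) → A) →ₐ[κ] (Equiv.Perm (Fin n) → A)) where
  toFun w :=
    { toFun := fun f u => τ w (f (w⁻¹ * u))
      map_one' := by ext; simp
      map_mul' := by intros; ext; simp
      map_zero' := by ext; simp
      map_add' := by intros; ext; simp
      commutes' := by
        intro c
        ext u
        simp only [Pi.algebraMap_apply, AlgHom.commutes] }
  map_one' := by ext f u; simp
  map_mul' v w := by
    ext f u
    simp [AlgHom.mul_apply, mul_assoc]

theorem piTau_apply (τ : Equiv.Perm (Fin n) →* (A →ₐ[κ] A)) (w u : Equiv.Perm (Fin n))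
    (f : Equiv.Perm (Fin n) → A) : piTau τ w f u = τ w (f (w⁻¹ * u)) := rfl

/-- The function `u ↦ Q_{ij}` if `u⁻¹ i < u⁻¹ j`, and `1` otherwise. -/
def piK (Q : Fin n → Fin n → A) (i j : Fin n) : Equiv.Perm (Fin n) → A :=
  fun u => if u⁻¹ i < u⁻¹ j then Q i j else 1

/-- Constant functions. -/
def piG (g : Fin n → Fin n → A) (i j : Fin n) : Equiv.Perm (Fin n) → A := fun _ => g i j

theorem piTau_piG (τ : Equiv.Perm (Fin n) →* (A →ₐ[κ] A)) (g : Fin n → Fin n → A)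
    (hg : ∀ w i j, τ w (g i j) = g (w i) (w j)) (w : Equiv.Perm (Fin n)) (i j : Fin n) :
    piTau τ w (piG g i j) = piG g (w i) (w j) := by
  ext u
  simp [piTau_apply, piG, hg]

theorem piTau_piK (τ : Equiv.Perm (Fin n) →* (A →ₐ[κ] A)) (Q : Fin n → Fin n → A)
    (hQ : ∀ w i j, τ w (Q i j) = Q (w i) (w j)) (w : Equiv.Perm (Fin n)) (i j : Fin n) :
    piTau τ w (piK Q i j) = piK Q (w i) (w j) := by
  ext u
  simp only [piTau_apply, piK, mul_inv_rev, inv_inv, Equiv.Perm.mul_apply]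
  split_ifs
  · exact hQ _ _ _
  · exact map_one _

theorem piK_mul (Q : Fin n → Fin n → A) (hQs : ∀ i j, Q i j = Q j i) {i j : Fin n} (h : i ≠ j) :
    piK Q i j * piK Q j i = fun _ => Q i j := by
  ext u
  simp only [piK, Pi.mul_apply]
  rcases lt_trichotomy (u⁻¹ i) (u⁻¹ j) with h1 | h1 | h1
  · rw [if_pos h1, if_neg h1.not_gt, mul_one]
  · exact absurd (u⁻¹.injective h1) h
  · rw [if_pos h1, if_neg h1.not_gt, one_mul, hQs i j]

theorem piK_comm (Q : Fin n → Fin n → A) (hQc : ∀ i j y, Q i j * y = y * Q i j) (i j : Fin n)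
    (y : Equiv.Perm (Fin n) → A) : piK Q i j * y = y * piK Q i j := by
  ext u
  simp only [piK, Pi.mul_apply]
  split_ifs
  · exact hQc _ _ _
  · simp

/-- The operator attached to a simple transposition. -/
noncomputable def sop (τ : Equiv.Perm (Fin (m + 2)) →* (A →ₐ[κ] A))
    (g Q : Fin (m + 2) → Fin (m + 2) → A) (i : Fin (m + 1)) :
    Module.End κ (Equiv.Perm (Fin (m + 2)) → A) :=
  hop (piTau τ) (piG g) (piK Q) i.castSucc i.succ

theorem sop_apply (τ : Equiv.Perm (Fin (m + 2)) →* (A →ₐ[κ] A))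
    (g Q : Fin (m + 2) → Fin (m + 2) → A) (i : Fin (m + 1))
    (f : Equiv.Perm (Fin (m + 2)) → A) (u : Equiv.Perm (Fin (m + 2))) :
    sop m τ g Q i f u = g i.castSucc i.succ * f u +
      piK Q i.castSucc i.succ u * τ (swPerm m i) (f (swPerm m i * u)) := by
  have h : (swPerm m i) * u = (swPerm m i)⁻¹ * u := by rw [swPerm_inv]
  rw [h]
  rfl

theorem sop_word (τ : Equiv.Perm (Fin (m + 2)) →* (A →ₐ[κ] A))
    (g Q : Fin (m + 2) → Fin (m + 2) → A) (a : A) (L : List (Fin (m + 1)))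
    (w : Equiv.Perm (Fin (m + 2))) (hL : IsReducedWord m L w) :
    ((L.map (sop m τ g Q)).prod (Pi.single 1 a)) w = τ w a ∧
    ∀ u, u ≠ w → invCount m w ≤ invCount m u →
      ((L.map (sop m τ g Q)).prod (Pi.single 1 a)) u = 0 := by
  induction L generalizing w with
  | nil =>
    obtain ⟨h, -⟩ := hL
    simp only [List.map_nil, List.prod_nil] at h
    subst h
    constructor
    · simp
    · intro u hu _
      simp [Pi.single_eq_of_ne hu]
  | cons i L ih =>
    obtain ⟨hL', hlen⟩ := isReducedWord_tail m hL
    obtain ⟨ih1, ih2⟩ := ih _ hL'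
    set f := (L.map (sop m τ g Q)).prod (Pi.single 1 a) with hf
    have e : ∀ u, ((((i :: L).map (sop m τ g Q)).prod) (Pi.single 1 a)) u =
        g i.castSucc i.succ * f u +
        piK Q i.castSucc i.succ u * τ (swPerm m i) (f (swPerm m i * u)) := by
      intro u
      rw [List.map_cons, List.prod_cons, Module.End.mul_apply, sop_apply]
    have ew : swPerm m i * (swPerm m i * w) = w := by
      rw [← mul_assoc, swPerm_mul_self, one_mul]
    have hself : ∀ v, swPerm m i * (swPerm m i * v) = v := by
      intro v
      rw [← mul_assoc, swPerm_mul_self, one_mul]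
    constructor
    · rw [e, ih2 w (by intro h; rw [← h] at hlen; omega) (by omega), mul_zero, zero_add, ih1]
      have hd : w⁻¹ i.succ < w⁻¹ i.castSucc := by
        rcases asc_or_desc m i w with h | h
        · have := invCount_asc m i w h
          omega
        · exact h
      have hk : piK Q i.castSucc i.succ w = 1 := by
        simp only [piK]
        rw [if_neg hd.not_gt]
      rw [hk, one_mul, ← AlgHom.mul_apply, ← map_mul, ew]
    · intro u hu hle
      have h1 : f u = 0 := ih2 u (by rintro rfl; omega) (by omega)
      have h3 := invCount_le m i (swPerm m i * u)
      rw [hself] at h3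
      have h2 : f (swPerm m i * u) = 0 := by
        apply ih2
        · intro h
          exact hu (mul_left_cancel h)
        · omega
      rw [e, h1, h2, map_zero, mul_zero, mul_zero, add_zero]

theorem triangular_inj {P N W : Type*} [AddCommGroup N] (ℓ : P → ℕ) [AddCommGroup W] (θ : P → N → W)
    (hθ : ∀ p b, θ p b = 0 → b = 0) (e : P → N → (P → W))
    (h1 : ∀ p b, e p b p = θ p b) (h2 : ∀ p b q, q ≠ p → ℓ p ≤ ℓ q → e p b q = 0)
    (f : P →₀ N) (hf : (f.sum fun p b => e p b) = 0) : f = 0 := by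
  classical
  by_contra hne
  obtain ⟨p, hp, hmax⟩ := Finset.exists_max_image f.support ℓ (Finsupp.support_nonempty_iff.2 hne)
  have h3 := congrFun hf p
  rw [Finsupp.sum, Finset.sum_apply, Finset.sum_eq_single p, h1] at h3
  · exact (Finsupp.mem_support_iff.1 hp) (hθ _ _ h3)
  · intro q hq hqp
    exact h2 _ _ _ hqp.symm (hmax q hq)
  · intro h
    exact absurd hp h

end PiModel

section ModelTheorem
variable [Field k] [Ring F] [Algebra k F]
variable (Δf : Fin 2 → Fin 2 → F ⊗[k] F) (Rv : F ⊗[k] F)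
variable (ρf : Fin (m + 1) → BD k F m →ₗ[k] BD k F m)

theorem model_injective
    (HwF : Equiv.Perm (Fin (m + 2)) → QWP k F m Δf Rv ρf)
    (hHw : ∀ w L, IsReducedWord m L w →
      HwF w = (L.map (genH k F m Δf Rv ρf)).prod)
    {A : Type*} [Ring A] [Algebra k A] (φ : BD k F m →ₐ[k] A) (hφ : Function.Injective φ)
    (τ : Equiv.Perm (Fin (m + 2)) →* (A →ₐ[k] A))
    (hφσ : ∀ i b, φ (sigmaB k F m i b) = τ (swPerm m i) (φ b))
    (g Q : Fin (m + 2) → Fin (m + 2) → A)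
    (hg : ∀ w i j, τ w (g i j) = g (w i) (w j))
    (hQ : ∀ w i j, τ w (Q i j) = Q (w i) (w j))
    (hQs : ∀ i j, Q i j = Q j i)
    (hQc : ∀ i j y, Q i j * y = y * Q i j)
    (h1 : ∀ a b c, a ≠ b → b ≠ c → a ≠ c → g a c * g b a + g a b * g b c = g b c * g a c)
    (h2 : ∀ a b c, a ≠ b → b ≠ c → a ≠ c → g a b * g a c = g a c * g c b + g b c * g a b)
    (h3 : ∀ a b c, a ≠ b → b ≠ c → a ≠ c → g a b * g b c * g a b + g a c * Q a b =
      g b c * g a b * g b c + g a c * Q b c)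
    (hfar : ∀ a b c d, a ≠ b → c ≠ d → a ≠ c → a ≠ d → b ≠ c → b ≠ d →
      g a b * g c d = g c d * g a b)
    (hS : ∀ i : Fin (m + 1), g i.castSucc i.succ + g i.succ i.castSucc = φ (SI k F m Δf i))
    (hR : ∀ i : Fin (m + 1), Q i.castSucc i.succ =
      φ (RI k F m Rv i) + g i.castSucc i.succ * g i.succ i.castSucc)
    (hgg : ∀ i j, g i j * g j i = g j i * g i j)
    (hw : ∀ (i : Fin (m + 1)) b, g i.castSucc i.succ * φ b =
      φ (sigmaB k F m i b) * g i.castSucc i.succ + φ (ρf i b)) :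
    Function.Injective (pbwL k F m Δf Rv ρf HwF) ∧
    Function.Injective (pbwR k F m Δf Rv ρf HwF) := by
  let cst : A → (Equiv.Perm (Fin (m + 2)) → A) := fun a _ => a
  let gen : BD k F m ⊕ Fin (m + 1) → Module.End k (Equiv.Perm (Fin (m + 2)) → A) :=
    Sum.elim (fun b => LinearMap.mulLeft k (cst (φ b))) (sop m τ g Q)
  have hG := piTau_piG τ g hg
  have hK := piTau_piK τ Q hQ
  have hKc := piK_comm Q hQc
  have hne : ∀ i : Fin (m + 1), i.castSucc ≠ i.succ := fun i => by simp [Fin.ext_iff]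
  have hrel : ∀ ⦃x y⦄, QRel k F m Δf Rv ρf x y →
      FreeAlgebra.lift k gen x = FreeAlgebra.lift k gen y := by
    intro x y hxy
    cases hxy with
    | add_gen a b =>
      simp only [map_add, FreeAlgebra.lift_ι_apply, gen, Sum.elim_inl]
      ext f u
      simp [cst, add_mul]
    | smul_gen c a =>
      simp only [map_smul, FreeAlgebra.lift_ι_apply, gen, Sum.elim_inl]
      ext f u
      simp [cst]
    | mul_gen a b =>
      simp only [map_mul, FreeAlgebra.lift_ι_apply, gen, Sum.elim_inl]
      ext f u
      simp [cst, mul_assoc]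
    | one_gen =>
      simp only [map_one, FreeAlgebra.lift_ι_apply, gen, Sum.elim_inl]
      ext f u
      simp [cst]
    | braid_far i j h =>
      simp only [map_mul, FreeAlgebra.lift_ι_apply, gen, Sum.elim_inr]
      have e1 : i.castSucc ≠ j.castSucc := by simp only [Ne, Fin.ext_iff, Fin.val_castSucc]; omega
      have e2 : i.castSucc ≠ j.succ := by
        simp only [Ne, Fin.ext_iff, Fin.val_castSucc, Fin.val_succ]; omega
      have e3 : i.succ ≠ j.castSucc := by
        simp only [Ne, Fin.ext_iff, Fin.val_castSucc, Fin.val_succ]; omega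
      have e4 : i.succ ≠ j.succ := by simp only [Ne, Fin.ext_iff, Fin.val_succ]; omega
      exact hop_far _ _ _ hG hK hKc e1 e2 e3 e4
        (funext fun _ => hfar _ _ _ _ (hne i) (hne j) e1 e2 e3 e4)
    | braid i j h =>
      simp only [map_mul, FreeAlgebra.lift_ι_apply, gen, Sum.elim_inr]
      have e0 : j.castSucc = i.succ := by
        simp only [Fin.ext_iff, Fin.val_castSucc, Fin.val_succ]; omega
      have e1 := hne i
      have e2 := hne j
      rw [e0] at e2
      have e3 : i.castSucc ≠ j.succ := by
        simp only [Ne, Fin.ext_iff, Fin.val_castSucc, Fin.val_succ]; omega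
      unfold sop
      rw [e0]
      refine hop_braid _ _ _ hG hK hKc e1 e2 e3 (funext fun _ => h1 _ _ _ e1 e2 e3)
        (funext fun _ => h2 _ _ _ e1 e2 e3) ?_
      rw [piK_mul Q hQs e1, piK_mul Q hQs e2]
      exact funext fun _ => h3 _ _ _ e1 e2 e3
    | quad i =>
      simp only [map_mul, map_add, FreeAlgebra.lift_ι_apply, gen, Sum.elim_inr, Sum.elim_inl]
      refine hop_quad _ _ _ hG hK _ _ (funext fun _ => hS i) ?_ (funext fun _ => hgg _ _) hKc
      rw [piK_mul Q hQs (hne i)]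
      exact funext fun _ => hR i
    | wreath i b =>
      simp only [map_mul, map_add, FreeAlgebra.lift_ι_apply, gen, Sum.elim_inr, Sum.elim_inl]
      have e : cst (φ (sigmaB k F m i b)) = piTau τ (Equiv.swap i.castSucc i.succ) (cst (φ b)) := by
        funext u
        exact hφσ i b
      rw [e]
      refine hop_wreath _ _ _ _ _ ?_ hKc
      rw [← e]
      exact funext fun _ => hw i b
  let Φ : QWP k F m Δf Rv ρf →ₐ[k] Module.End k (Equiv.Perm (Fin (m + 2)) → A) :=
    RingQuot.liftAlgHom k ⟨FreeAlgebra.lift k gen, hrel⟩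
  have hΦB : ∀ b, Φ (embB k F m Δf Rv ρf b) = LinearMap.mulLeft k (cst (φ b)) := by
    intro b
    simp only [Φ, embB, RingQuot.liftAlgHom_mkAlgHom_apply, FreeAlgebra.lift_ι_apply, gen,
      Sum.elim_inl]
  have hΦH : ∀ i, Φ (genH k F m Δf Rv ρf i) = sop m τ g Q i := by
    intro b
    simp only [Φ, genH, RingQuot.liftAlgHom_mkAlgHom_apply, FreeAlgebra.lift_ι_apply, gen,
      Sum.elim_inr]
  have hΦw : ∀ w a, (Φ (HwF w) (Pi.single 1 a)) w = τ w a ∧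
      ∀ u, u ≠ w → invCount m w ≤ invCount m u → (Φ (HwF w) (Pi.single 1 a)) u = 0 := by
    intro w a
    obtain ⟨L, hL⟩ := exists_reducedWord m w
    have e : Φ (HwF w) = (L.map (sop m τ g Q)).prod := by
      rw [hHw w L hL, map_list_prod, List.map_map]
      congr 2
      funext i
      exact hΦH i
    rw [e]
    exact sop_word m τ g Q a L w hL
  have hτ : ∀ w a, τ w a = 0 → a = 0 := by
    intro w a h
    have := congrArg (τ w⁻¹) h
    rw [← AlgHom.mul_apply, ← map_mul, inv_mul_cancel, map_one, map_zero] at this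
    exact this
  constructor
  · rw [injective_iff_map_eq_zero]
    intro f hf
    refine triangular_inj (invCount m) (fun _ b => φ b)
      (fun _ b hb => (injective_iff_map_eq_zero φ).1 hφ b hb)
      (fun w b => Φ (embB k F m Δf Rv ρf b * HwF w) (Pi.single 1 1)) ?_ ?_ f ?_
    · intro w b
      rw [map_mul, Module.End.mul_apply, hΦB, LinearMap.mulLeft_apply, Pi.mul_apply,
        (hΦw w 1).1, map_one, mul_one]
    · intro w b u hu hl
      rw [map_mul, Module.End.mul_apply, hΦB, LinearMap.mulLeft_apply, Pi.mul_apply,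
        (hΦw w 1).2 u hu hl, mul_zero]
    · have h4 := congrArg (fun x => Φ x (Pi.single 1 1)) hf
      simp only [map_zero, LinearMap.zero_apply] at h4
      rw [← h4]
      simp only [pbwL, Finsupp.lsum_apply, Finsupp.sum, map_sum, LinearMap.sum_apply]
      rfl
  · rw [injective_iff_map_eq_zero]
    intro f hf
    have hs : ∀ b, LinearMap.mulLeft k (cst (φ b)) (Pi.single 1 1) = Pi.single 1 (φ b) := by
      intro b
      funext u
      rw [LinearMap.mulLeft_apply, Pi.mul_apply]
      by_cases hu : u = 1
      · subst hu; simp [cst]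
      · simp [Pi.single_eq_of_ne hu]
    refine triangular_inj (invCount m) (fun w b => τ w (φ b))
      (fun w b hb => (injective_iff_map_eq_zero φ).1 hφ b (hτ _ _ hb))
      (fun w b => Φ (HwF w * embB k F m Δf Rv ρf b) (Pi.single 1 1)) ?_ ?_ f ?_
    · intro w b
      rw [map_mul, Module.End.mul_apply, hΦB, hs, (hΦw w _).1]
    · intro w b u hu hl
      rw [map_mul, Module.End.mul_apply, hΦB, hs, (hΦw w _).2 u hu hl]
    · have h4 := congrArg (fun x => Φ x (Pi.single 1 1)) hf
      simp only [map_zero, LinearMap.zero_apply] at h4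
      rw [← h4]
      simp only [pbwR, Finsupp.lsum_apply, Finsupp.sum, map_sum, LinearMap.sum_apply]
      rfl

end ModelTheorem

section TensorPower
variable [Field k] [Ring F] [Algebra k F]

/-- Insertion into slot `i` as an algebra homomorphism. -/
noncomputable def insA (i : Fin (m + 2)) : F →ₐ[k] TPow k F m :=
  PiTensorProduct.singleAlgHom (R := k) (A := fun _ : Fin (m + 2) => F) i

theorem insA_eq (i : Fin (m + 2)) (a : F) : insA k F m i a = ins k F m i a := rfl

theorem ins_eq_tprod (i : Fin (m + 2)) (a : F) :
    insA k F m i a = tprod k (Pi.mulSingle (M := fun _ : Fin (m + 2) => F) i a) := rfl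

theorem insA_commute {i j : Fin (m + 2)} (h : i ≠ j) (a b : F) :
    Commute (insA k F m i a) (insA k F m j b) := by
  rw [ins_eq_tprod, ins_eq_tprod]
  exact Commute.tprod (Pi.mulSingle_commute (f := fun _ : Fin (m + 2) => F) h a b)

theorem insA_induction (S : Subalgebra k (TPow k F m)) (h : ∀ i a, insA k F m i a ∈ S)
    (y : TPow k F m) : y ∈ S := by
  induction y using PiTensorProduct.induction_on with
  | smul_tprod r f =>
    apply S.smul_mem
    have e := Finset.noncommProd_mulSingle (M := fun _ : Fin (m + 2) => F) f
    have e2 : tprod k f = tprod k (Finset.univ.noncommProd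
      (fun i => Pi.mulSingle (M := fun _ : Fin (m + 2) => F) i (f i))
      (fun i _ j _ _ => Pi.mulSingle_apply_commute f i j)) := by rw [e]
    rw [e2]
    have e3 := PiTensorProduct.tprod_noncommProd (R := k) (A := fun _ : Fin (m + 2) => F)
      Finset.univ (fun i => Pi.mulSingle (M := fun _ : Fin (m + 2) => F) i (f i))
      (fun i _ j _ _ => Pi.mulSingle_apply_commute f i j)
    rw [e3]
    apply Submonoid.noncommProd_mem (S := S.toSubsemiring.toSubmonoid)
    intro i _
    exact h i (f i)
  | add x y hx hy => exact S.add_mem hx hy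

/-- `place` as an algebra homomorphism. -/
noncomputable def placeA (i j : Fin (m + 2)) (h : i ≠ j) : F ⊗[k] F →ₐ[k] TPow k F m :=
  Algebra.TensorProduct.lift (insA k F m i) (insA k F m j) (insA_commute k F m h)

theorem placeA_eq (i j : Fin (m + 2)) (h : i ≠ j) (Y : F ⊗[k] F) :
    placeA k F m i j h Y = place k F m i j Y := by
  induction Y using TensorProduct.induction_on with
  | zero => rw [map_zero, map_zero]
  | add x y hx hy => rw [map_add, map_add, hx, hy]
  | tmul a b =>
    simp only [placeA, Algebra.TensorProduct.lift_tmul, place, TensorProduct.lift.tmul]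
    rfl

theorem place_tmul (i j : Fin (m + 2)) (a b : F) :
    place k F m i j (a ⊗ₜ b) = insA k F m i a * insA k F m j b := rfl

/-- Place permutation as an algebra homomorphism. -/
noncomputable def rx : Equiv.Perm (Fin (m + 2)) →* (TPow k F m →ₐ[k] TPow k F m) where
  toFun w := AlgHom.ofLinearMap
    (PiTensorProduct.reindex k (fun _ => F) w).toLinearMap
    (by
      rw [PiTensorProduct.one_def]
      erw [PiTensorProduct.reindex_tprod]
      rfl)
    (by
      intro x y
      induction x using PiTensorProduct.induction_on with
      | add x x' hx hx' => rw [add_mul, map_add, hx, hx', map_add, add_mul]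
      | smul_tprod r f =>
        induction y using PiTensorProduct.induction_on with
        | add x x' hx hx' => rw [mul_add, map_add, hx, hx', map_add, mul_add]
        | smul_tprod s g =>
          rw [PiTensorProduct.smul_tprod_mul_smul_tprod, map_smul, map_smul, map_smul]
          erw [PiTensorProduct.reindex_tprod, PiTensorProduct.reindex_tprod,
            PiTensorProduct.reindex_tprod, PiTensorProduct.smul_tprod_mul_smul_tprod]
          rfl)
  map_one' := by
    apply AlgHom.toLinearMap_injective
    apply PiTensorProduct.ext
    ext f
    exact PiTensorProduct.reindex_tprod (R := k) (s := fun _ => F) 1 f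
  map_mul' v w := by
    apply AlgHom.toLinearMap_injective
    apply PiTensorProduct.ext
    ext f
    exact (PiTensorProduct.reindex_reindex (R := k) (s := fun _ => F) w v (tprod k f)).symm

theorem rx_tprod (w : Equiv.Perm (Fin (m + 2))) (f : Fin (m + 2) → F) :
    rx k F m w (tprod k f) = tprod k (fun i => f (w⁻¹ i)) :=
  PiTensorProduct.reindex_tprod (R := k) (s := fun _ => F) w f

theorem rx_sigmaT (i : Fin (m + 1)) (t : TPow k F m) :
    rx k F m (swPerm m i) t = sigmaT k F m i t := rfl

theorem rx_insA (w : Equiv.Perm (Fin (m + 2))) (i : Fin (m + 2)) (a : F) :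
    rx k F m w (insA k F m i a) = insA k F m (w i) a := by
  rw [ins_eq_tprod, rx_tprod, ins_eq_tprod]
  congr 1
  funext j
  by_cases h : j = w i
  · subst h
    simp
  · rw [Pi.mulSingle_eq_of_ne h, Pi.mulSingle_eq_of_ne]
    intro h'
    apply h
    rw [← h']
    exact (w.apply_symm_apply j).symm

theorem rx_place (w : Equiv.Perm (Fin (m + 2))) (i j : Fin (m + 2)) (Y : F ⊗[k] F) :
    rx k F m w (place k F m i j Y) = place k F m (w i) (w j) Y := by
  induction Y using TensorProduct.induction_on with
  | zero => simp only [map_zero]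
  | add x y hx hy => simp only [map_add, hx, hy]
  | tmul a b => rw [place_tmul, place_tmul, map_mul, rx_insA, rx_insA]

theorem place_symm {i j : Fin (m + 2)} (h : i ≠ j) (Y : F ⊗[k] F) (hY : IsSymmEl k F Y) :
    place k F m i j Y = place k F m j i Y := by
  have key : ∀ Z : F ⊗[k] F, place k F m i j Z =
      place k F m j i (Algebra.TensorProduct.comm k F F Z) := by
    intro Z
    induction Z using TensorProduct.induction_on with
    | zero => simp only [map_zero]
    | add x y hx hy => simp only [map_add, hx, hy]
    | tmul a b =>
      rw [Algebra.TensorProduct.comm_tmul, place_tmul, place_tmul, (insA_commute k F m h a b).eq]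
  rw [key Y, show Algebra.TensorProduct.comm k F F Y = Y from hY]

theorem place_commute_insA {i j l : Fin (m + 2)} (hi : l ≠ i) (hj : l ≠ j) (Y : F ⊗[k] F) (a : F) :
    Commute (place k F m i j Y) (insA k F m l a) := by
  induction Y using TensorProduct.induction_on with
  | zero => rw [map_zero]; exact Commute.zero_left _
  | add x y hx hy => rw [map_add]; exact hx.add_left hy
  | tmul b c =>
    rw [place_tmul]
    exact (insA_commute k F m hi.symm b a).mul_left (insA_commute k F m hj.symm c a)

theorem place_commute_place {i j l n : Fin (m + 2)} (hi : l ≠ i) (hj : l ≠ j) (hi' : n ≠ i)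
    (hj' : n ≠ j) (Y Z : F ⊗[k] F) :
    Commute (place k F m i j Y) (place k F m l n Z) := by
  induction Z using TensorProduct.induction_on with
  | zero => rw [map_zero]; exact Commute.zero_right _
  | add x y hx hy => rw [map_add]; exact hx.add_right hy
  | tmul b c =>
    rw [place_tmul]
    exact (place_commute_insA k F m hi hj Y b).mul_right (place_commute_insA k F m hi' hj' Y c)

theorem insA_fst {i j : Fin (m + 2)} (h : i ≠ j) (a : F) :
    insA k F m i a = placeA k F m i j h (a ⊗ₜ 1) := by
  simp [placeA]

theorem insA_snd {i j : Fin (m + 2)} (h : i ≠ j) (a : F) :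
    insA k F m j a = placeA k F m i j h (1 ⊗ₜ a) := by
  simp [placeA]

theorem place_frob {i j : Fin (m + 2)} (h : i ≠ j) (Y : F ⊗[k] F) (hY : IsWeakFrobenius k F Y)
    (y : TPow k F m) :
    place k F m i j Y * y = rx k F m (Equiv.swap i j) y * place k F m i j Y := by
  let S : Subalgebra k (TPow k F m) :=
    { carrier := {y | place k F m i j Y * y = rx k F m (Equiv.swap i j) y * place k F m i j Y}
      mul_mem' := by
        intro a b ha hb
        simp only [Set.mem_ofPred_eq] at *
        rw [map_mul, ← mul_assoc, ha, mul_assoc, hb, mul_assoc]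
      one_mem' := by simp
      add_mem' := by
        intro a b ha hb
        simp only [Set.mem_ofPred_eq] at *
        rw [map_add, mul_add, add_mul, ha, hb]
      zero_mem' := by simp
      algebraMap_mem' := by
        intro r
        simp only [Set.mem_ofPred_eq]
        rw [AlgHom.commutes]
        exact (Algebra.commutes r _).symm }
  refine insA_induction k F m S ?_ y
  intro l a
  change place k F m i j Y * insA k F m l a =
    rx k F m (Equiv.swap i j) (insA k F m l a) * place k F m i j Y
  rw [rx_insA]
  by_cases hi : l = i
  · subst hi
    rw [Equiv.swap_apply_left, insA_fst k F m h, insA_snd k F m h, ← placeA_eq k F m l j h,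
      ← map_mul, ← map_mul, hY]
  · by_cases hj : l = j
    · subst hj
      rw [Equiv.swap_apply_right, insA_snd k F m h, insA_fst k F m h, ← placeA_eq k F m i l h,
        ← map_mul, ← map_mul, hY]
    · rw [Equiv.swap_apply_of_ne_of_ne hi hj]
      exact place_commute_insA k F m hi hj Y a

theorem place_central {i j : Fin (m + 2)} (h : i ≠ j) (Y : F ⊗[k] F) (hY : ∀ z, Y * z = z * Y)
    (y : TPow k F m) : place k F m i j Y * y = y * place k F m i j Y := by
  have : y ∈ Subalgebra.centralizer k {place k F m i j Y} := by
    refine insA_induction k F m _ ?_ y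
    intro l a
    rw [Subalgebra.mem_centralizer_iff]
    rintro _ rfl
    by_cases hi : l = i
    · subst hi
      rw [insA_fst k F m h, ← placeA_eq k F m l j h, ← map_mul, ← map_mul, hY]
    · by_cases hj : l = j
      · subst hj
        rw [insA_snd k F m h, ← placeA_eq k F m i l h, ← map_mul, ← map_mul, hY]
      · exact place_commute_insA k F m hi hj Y a
  rw [Subalgebra.mem_centralizer_iff] at this
  exact this _ rfl

theorem place_A2 {a b c : Fin (m + 2)} (X₁ Y₁ X₂ Y₂ : F ⊗[k] F)
    (h : emb12 k F X₁ * emb23 k F Y₁ = emb12 k F X₂ * emb23 k F Y₂) :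
    place k F m a b X₁ * place k F m b c Y₁ = place k F m a b X₂ * place k F m b c Y₂ := by
  let θ : F ⊗[k] (F ⊗[k] F) →ₗ[k] TPow k F m :=
    TensorProduct.lift
      ((LinearMap.mul k (TPow k F m)).compl₁₂ (insA k F m a).toLinearMap (place k F m b c))
  have key : ∀ X Y, θ (emb12 k F X * emb23 k F Y) = place k F m a b X * place k F m b c Y := by
    intro X Y
    induction X using TensorProduct.induction_on with
    | zero => simp only [map_zero, zero_mul]
    | add x y hx hy => rw [map_add, add_mul, map_add, map_add, add_mul, hx, hy]
    | tmul p q =>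
      induction Y using TensorProduct.induction_on with
      | zero => simp only [map_zero, mul_zero]
      | add x y hx hy => rw [map_add, mul_add, map_add, map_add, mul_add, hx, hy]
      | tmul r s =>
        have e1 : emb12 k F (p ⊗ₜ q) * emb23 k F (r ⊗ₜ s) = p ⊗ₜ ((q * r) ⊗ₜ s) := by
          simp [emb12, emb23]
        have e2 : θ (p ⊗ₜ ((q * r) ⊗ₜ s)) =
            insA k F m a p * (insA k F m b (q * r) * insA k F m c s) := rfl
        rw [e1, e2, place_tmul, place_tmul, map_mul]
        simp only [mul_assoc]
  rw [← key, ← key, h]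

end TensorPower

section GModel
variable {ι K A : Type*} [DecidableEq ι] [Field K] [Ring A] [Algebra K A]

/-- The element `β` placed in slots `i, j`, evaluated at scalars `s, t`. -/
def bG (P : Fin 2 → Fin 2 → ι → ι → A) (i j : ι) (s t : K) : A :=
  P 0 0 i j + s • P 1 0 i j + t • P 0 1 i j + (s * t) • P 1 1 i j

/-- The element `β_{ij} / (x_i - x_j)`. -/
def gG (P : Fin 2 → Fin 2 → ι → ι → A) (x : ι → K) (i j : ι) : A :=
  (x i - x j)⁻¹ • bG P i j (x i) (x j)

/-- The hypotheses on the elements `P^{ab}_{ij}`. -/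
structure GData (P : Fin 2 → Fin 2 → ι → ι → A) (θ : ι → ι → A →ₐ[K] A) : Prop where
  sym : ∀ a b i j, i ≠ j → P a b i j = P a b j i
  frob : ∀ a b i j y, i ≠ j → P a b i j * y = θ i j y * P a b i j
  theta : ∀ a b i j l n, θ i j (P a b l n) = P a b (Equiv.swap i j l) (Equiv.swap i j n)
  invol : ∀ i j y, θ i j (θ i j y) = y
  a2 : ∀ i j l, i ≠ j → j ≠ l → i ≠ l → P 0 0 i j * P 1 1 j l = P 0 1 i j * P 1 0 j l

variable {P : Fin 2 → Fin 2 → ι → ι → A} {θ : ι → ι → A →ₐ[K] A}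

theorem GData.bsym (H : GData P θ) {i j : ι} (h : i ≠ j) (s t : K) : bG P i j s t = bG P j i s t := by
  simp only [bG, H.sym _ _ i j h]

theorem GData.bfrob (H : GData P θ) {i j : ι} (h : i ≠ j) (s t : K) (y : A) :
    bG P i j s t * y = θ i j y * bG P i j s t := by
  simp only [bG, add_mul, mul_add, smul_mul_assoc, mul_smul_comm, H.frob _ _ i j y h]

theorem GData.btheta (H : GData P θ) (i j l n : ι) (s t : K) :
    θ i j (bG P l n s t) = bG P (Equiv.swap i j l) (Equiv.swap i j n) s t := by
  simp only [bG, map_add, map_smul, H.theta]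

/-- class 1: `P₁₃ P₂₁ = P₁₂ P₂₃`. -/
theorem GData.c1 (H : GData P θ) {a b c : ι} (hab : a ≠ b) (hbc : b ≠ c) (hac : a ≠ c)
    (p q r s : Fin 2) : P p q a c * P r s b a = P p q a b * P r s b c := by
  rw [H.frob p q a c _ hac, H.theta, Equiv.swap_apply_of_ne_of_ne hab.symm hbc,
    Equiv.swap_apply_left, H.frob r s b c _ hbc, H.theta,
    Equiv.swap_apply_of_ne_of_ne hab hac, Equiv.swap_apply_right]

theorem GData.c1' (H : GData P θ) {a b c : ι} (hab : a ≠ b) (hbc : b ≠ c) (hac : a ≠ c)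
    (p q r s : Fin 2) : P r s b c * P p q a c = P p q a b * P r s b c := by
  rw [H.frob r s b c _ hbc, H.theta,
    Equiv.swap_apply_of_ne_of_ne hab hac, Equiv.swap_apply_right]

theorem GData.c1s (H : GData P θ) {a b c : ι} (hab : a ≠ b) (hbc : b ≠ c) (hac : a ≠ c)
    (p q r s : Fin 2) : P p q a b * P r s b c = P r s a b * P p q b c := by
  rw [H.frob p q a b _ hab, H.theta, Equiv.swap_apply_right,
    Equiv.swap_apply_of_ne_of_ne hac.symm hbc.symm, H.sym p q a b hab, H.c1 hab hbc hac]

/-- class 2 -/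
theorem GData.c2 (H : GData P θ) {a b c : ι} (hab : a ≠ b) (hbc : b ≠ c) (hac : a ≠ c)
    (p q r s : Fin 2) : P p q a b * P r s a c = P r s b c * P p q a b := by
  rw [H.frob p q a b _ hab, H.theta, Equiv.swap_apply_left,
    Equiv.swap_apply_of_ne_of_ne hac.symm hbc.symm]

theorem GData.c2' (H : GData P θ) {a b c : ι} (hab : a ≠ b) (hbc : b ≠ c) (hac : a ≠ c)
    (p q r s : Fin 2) : P r s a c * P p q c b = P r s b c * P p q a b := by
  rw [H.frob r s a c _ hac, H.theta, Equiv.swap_apply_right,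
    Equiv.swap_apply_of_ne_of_ne hab.symm hbc, H.c2 hab hbc hac]

theorem GData.c2s (H : GData P θ) {a b c : ι} (hab : a ≠ b) (hbc : b ≠ c) (hac : a ≠ c)
    (p q r s : Fin 2) : P p q b c * P r s a b = P r s b c * P p q a b := by
  rw [H.frob p q b c _ hbc, H.theta, Equiv.swap_apply_left,
    Equiv.swap_apply_of_ne_of_ne hab hac, H.sym p q b c hbc, H.c2' hab hbc hac]

theorem GData.a2' (H : GData P θ) {a b c : ι} (hab : a ≠ b) (hbc : b ≠ c) (hac : a ≠ c) :
    P 0 0 b c * P 1 1 a b = P 0 1 b c * P 1 0 a b := by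
  have := H.a2 c b a hbc.symm hab.symm hac.symm
  rwa [H.sym _ _ c b hbc.symm, H.sym _ _ b a hab.symm, H.sym _ _ c b hbc.symm,
    H.sym _ _ b a hab.symm] at this

variable {x : ι → K}

theorem GData.h1 (H : GData P θ) (hx : Function.Injective x) {a b c : ι} (hab : a ≠ b)
    (hbc : b ≠ c) (hac : a ≠ c) :
    gG P x a c * gG P x b a + gG P x a b * gG P x b c = gG P x b c * gG P x a c := by
  have e1 : x a - x b ≠ 0 := sub_ne_zero.2 fun h => hab (hx h)
  have e2 : x b - x c ≠ 0 := sub_ne_zero.2 fun h => hbc (hx h)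
  have e3 : x a - x c ≠ 0 := sub_ne_zero.2 fun h => hac (hx h)
  have e4 : x b - x a ≠ 0 := sub_ne_zero.2 fun h => hab (hx h).symm
  simp only [gG, bG, smul_mul_assoc, mul_smul_comm, mul_add, add_mul, smul_add, smul_smul,
    H.c1 hab hbc hac, H.c1' hab hbc hac]
  rw [H.c1s hab hbc hac 1 0 0 0, H.c1s hab hbc hac 0 1 0 0, H.c1s hab hbc hac 1 1 0 0,
    H.c1s hab hbc hac 1 0 0 1, H.c1s hab hbc hac 1 1 0 1, H.c1s hab hbc hac 1 1 1 0,
    H.a2 a b c hab hbc hac]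
  match_scalars <;> field_simp <;> ring

theorem GData.h2 (H : GData P θ) (hx : Function.Injective x) {a b c : ι} (hab : a ≠ b)
    (hbc : b ≠ c) (hac : a ≠ c) :
    gG P x a b * gG P x a c = gG P x a c * gG P x c b + gG P x b c * gG P x a b := by
  have e1 : x a - x b ≠ 0 := sub_ne_zero.2 fun h => hab (hx h)
  have e2 : x b - x c ≠ 0 := sub_ne_zero.2 fun h => hbc (hx h)
  have e3 : x a - x c ≠ 0 := sub_ne_zero.2 fun h => hac (hx h)
  have e4 : x c - x b ≠ 0 := sub_ne_zero.2 fun h => hbc (hx h).symm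
  simp only [gG, bG, smul_mul_assoc, mul_smul_comm, mul_add, add_mul, smul_add, smul_smul,
    H.c2 hab hbc hac, H.c2' hab hbc hac]
  rw [H.c2s hab hbc hac 1 0 0 0, H.c2s hab hbc hac 0 1 0 0, H.c2s hab hbc hac 1 1 0 0,
    H.c2s hab hbc hac 1 0 0 1, H.c2s hab hbc hac 1 1 0 1, H.c2s hab hbc hac 1 1 1 0,
    H.a2' hab hbc hac]
  match_scalars <;> field_simp <;> ring

theorem GData.gfrob (H : GData P θ) {i j : ι} (h : i ≠ j) (y : A) :
    gG P x i j * y = θ i j y * gG P x i j := by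
  simp only [gG, smul_mul_assoc, mul_smul_comm, H.bfrob h]

theorem GData.gfrob' (H : GData P θ) {i j : ι} (h : i ≠ j) (y : A) :
    gG P x j i * y = θ i j y * gG P x j i := by
  simp only [gG, smul_mul_assoc, mul_smul_comm, H.bsym h.symm, H.bfrob h]

theorem GData.gg_central (H : GData P θ) {i j : ι} (h : i ≠ j) (y : A) :
    gG P x i j * gG P x j i * y = y * (gG P x i j * gG P x j i) := by
  rw [mul_assoc, H.gfrob' h, ← mul_assoc, H.gfrob h, H.invol, mul_assoc]

theorem GData.hgg (H : GData P θ) (i j : ι) :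
    gG P x i j * gG P x j i = gG P x j i * gG P x i j := by
  by_cases h : i = j
  · rw [h]
  rw [H.gfrob h]
  congr 1
  simp only [gG, map_smul, H.btheta, Equiv.swap_apply_left, Equiv.swap_apply_right, H.bsym h]

theorem GData.bswap (H : GData P θ) {a b c : ι} (hab : a ≠ b) (hbc : b ≠ c) (hac : a ≠ c)
    (s t s' t' : K) :
    bG P b c s t * bG P a c s' t' = bG P b c s' t' * bG P a c s t := by
  simp only [bG, smul_mul_assoc, mul_smul_comm, mul_add, add_mul, smul_add, smul_smul,
    H.c1' hab hbc hac]
  rw [H.c1s hab hbc hac 1 0 0 0, H.c1s hab hbc hac 0 1 0 0, H.c1s hab hbc hac 1 1 0 0,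
    H.c1s hab hbc hac 1 0 0 1, H.c1s hab hbc hac 1 1 0 1, H.c1s hab hbc hac 1 1 1 0]
  match_scalars <;> ring

theorem GData.yb (H : GData P θ) {a b c : ι} (hab : a ≠ b) (hbc : b ≠ c) (hac : a ≠ c) :
    gG P x a b * gG P x a c * gG P x b c = gG P x b c * gG P x a c * gG P x a b := by
  rw [mul_assoc, H.gfrob hab]
  congr 1
  simp only [gG, map_mul, map_smul, H.btheta, Equiv.swap_apply_left, Equiv.swap_apply_right,
    Equiv.swap_apply_of_ne_of_ne hac.symm hbc.symm, smul_mul_assoc, mul_smul_comm]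
  rw [H.bswap hab hbc hac, smul_comm]

theorem GData.hS (H : GData P θ) (hx : Function.Injective x) {i j : ι} (h : i ≠ j) :
    gG P x i j + gG P x j i = P 1 0 i j - P 0 1 i j := by
  have e1 : x i - x j ≠ 0 := sub_ne_zero.2 fun h' => h (hx h')
  have e2 : x j - x i ≠ 0 := sub_ne_zero.2 fun h' => h (hx h').symm
  rw [gG, gG, H.bsym h.symm]
  simp only [bG, smul_add, smul_smul]
  match_scalars <;> field_simp <;> ring

theorem gG_wreath (hx : Function.Injective x) {i j : ι} (h : i ≠ j) (y z r : A)
    (hr : x i • r - x j • r = bG P i j (x i) (x j) * y - z * bG P i j (x i) (x j)) :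
    gG P x i j * y = z * gG P x i j + r := by
  have e1 : x i - x j ≠ 0 := sub_ne_zero.2 fun h' => h (hx h')
  rw [gG, smul_mul_assoc, mul_smul_comm, ← sub_eq_iff_eq_add', ← smul_sub, ← hr, ← sub_smul,
    smul_smul, inv_mul_cancel₀ e1, one_smul]

variable {R : ι → ι → A}

theorem GData.h3 (H : GData P θ) (hx : Function.Injective x)
    (hRc : ∀ i j y, i ≠ j → R i j * y = y * R i j) (hRs : ∀ i j, i ≠ j → R i j = R j i)
    (hRθ : ∀ i j l n, θ i j (R l n) = R (Equiv.swap i j l) (Equiv.swap i j n))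
    {a b c : ι} (hab : a ≠ b) (hbc : b ≠ c) (hac : a ≠ c) :
    gG P x a b * gG P x b c * gG P x a b + gG P x a c * (R a b + gG P x a b * gG P x b a) =
      gG P x b c * gG P x a b * gG P x b c + gG P x a c * (R b c + gG P x b c * gG P x c b) := by
  have r : gG P x a c * R a b = gG P x a c * R b c := by
    rw [H.gfrob hac, hRθ, Equiv.swap_apply_left, Equiv.swap_apply_of_ne_of_ne hab.symm hbc,
      hRs c b hbc.symm, hRc b c _ hbc]
  have k1 := congrArg (· * gG P x a b) (H.h1 (x := x) hx hab hbc hac)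
  have k2 := congrArg (· * gG P x b c) (H.h2 (x := x) hx hab hbc hac)
  simp only [add_mul] at k1 k2
  rw [H.yb hab hbc hac] at k2
  rw [mul_add, mul_add, r, H.hgg a b, H.hgg b c, ← mul_assoc, ← mul_assoc]
  have := k1.trans k2
  calc _ = gG P x a c * R b c + (gG P x a c * gG P x b a * gG P x a b + gG P x a b * gG P x b c * gG P x a b) := by abel
    _ = _ := by rw [this]; abel

end GModel

section Concrete
variable [Field k] [Ring F] [Algebra k F]

/-- The field of rational functions. -/
abbrev KF := FractionRing (MvPolynomial (Fin (m + 2)) k)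

/-- The variables in the field of rational functions. -/
noncomputable def xK (i : Fin (m + 2)) : KF k m := algebraMap (MvPolynomial (Fin (m + 2)) k) _ (X i)

theorem xK_injective : Function.Injective (xK k m) := by
  intro i j h
  exact MvPolynomial.X_injective (IsFractionRing.injective (MvPolynomial (Fin (m + 2)) k) (KF k m) h)

/-- The inclusion of polynomials in rational functions. -/
noncomputable def polyK : MvPolynomial (Fin (m + 2)) k →ₐ[k] KF k m :=
  IsScalarTower.toAlgHom k (MvPolynomial (Fin (m + 2)) k) (KF k m)

theorem polyK_apply (p : MvPolynomial (Fin (m + 2)) k) :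
    polyK k m p = algebraMap (MvPolynomial (Fin (m + 2)) k) (KF k m) p := rfl

theorem polyK_injective : Function.Injective (polyK k m) :=
  IsFractionRing.injective (MvPolynomial (Fin (m + 2)) k) (KF k m)

/-- The permutation action on rational functions. -/
noncomputable def kap (w : Equiv.Perm (Fin (m + 2))) : KF k m →ₐ[k] KF k m :=
  IsFractionRing.liftAlgHom (A := MvPolynomial (Fin (m + 2)) k)
    (g := (polyK k m).comp (rename w))
    ((polyK_injective k m).comp (rename_injective w w.injective))

theorem kap_poly (w : Equiv.Perm (Fin (m + 2))) (p : MvPolynomial (Fin (m + 2)) k) :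
    kap k m w (polyK k m p) = polyK k m (rename w p) := by
  exact IsFractionRing.lift_algebraMap (A := MvPolynomial (Fin (m + 2)) k)
    (g := ((polyK k m).comp (rename w) : _ →ₐ[k] KF k m).toRingHom)
    ((polyK_injective k m).comp (rename_injective w w.injective)) p

theorem kap_x (w : Equiv.Perm (Fin (m + 2))) (i : Fin (m + 2)) :
    kap k m w (xK k m i) = xK k m (w i) := by
  have := kap_poly k m w (X i)
  rwa [rename_X] at this

theorem KF_ext {f g : KF k m →ₐ[k] KF k m} (h : ∀ p, f (polyK k m p) = g (polyK k m p)) : f = g := by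
  apply AlgHom.coe_ringHom_injective
  exact IsFractionRing.ringHom_ext (A := MvPolynomial (Fin (m + 2)) k) h

/-- The model algebra. -/
abbrev AM := KF k m ⊗[k] TPow k F m

/-- The permutation action on the model algebra. -/
noncomputable def tauM : Equiv.Perm (Fin (m + 2)) →* (AM k F m →ₐ[k] AM k F m) where
  toFun w := Algebra.TensorProduct.map (kap k m w) (rx k F m w)
  map_one' := by
    have : kap k m 1 = AlgHom.id k _ := by
      apply KF_ext
      intro p
      rw [kap_poly]
      simp
    rw [this, map_one]
    exact Algebra.TensorProduct.map_id
  map_mul' v w := by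
    have : kap k m (v * w) = (kap k m v).comp (kap k m w) := by
      apply KF_ext
      intro p
      rw [kap_poly, AlgHom.comp_apply, kap_poly, kap_poly, rename_rename]
      rfl
    rw [this, map_mul]
    exact Algebra.TensorProduct.map_comp _ _ _ _

theorem tauM_tmul (w : Equiv.Perm (Fin (m + 2))) (c : KF k m) (t : TPow k F m) :
    tauM k F m w (c ⊗ₜ t) = kap k m w c ⊗ₜ rx k F m w t := rfl

theorem tauM_smul (w : Equiv.Perm (Fin (m + 2))) (c : KF k m) (y : AM k F m) :
    tauM k F m w (c • y) = kap k m w c • tauM k F m w y := by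
  induction y using TensorProduct.induction_on with
  | zero => simp
  | add x y hx hy => rw [smul_add, map_add, map_add, smul_add, hx, hy]
  | tmul d t =>
    rw [TensorProduct.smul_tmul', tauM_tmul, tauM_tmul, TensorProduct.smul_tmul', smul_eq_mul,
      map_mul, smul_eq_mul]

/-- The embedding of `B^{⊗d}` in the model algebra. -/
noncomputable def phiM : BD k F m →ₐ[k] AM k F m :=
  (Algebra.TensorProduct.map (polyK k m) (AlgHom.id k (TPow k F m))).comp
    (Algebra.TensorProduct.comm k (TPow k F m) (MvPolynomial (Fin (m + 2)) k)).toAlgHom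

theorem phiM_tmul (t : TPow k F m) (p : MvPolynomial (Fin (m + 2)) k) :
    phiM k F m (t ⊗ₜ p) = polyK k m p ⊗ₜ t := rfl

theorem phiM_tmul' (t : TPow k F m) (p : MvPolynomial (Fin (m + 2)) k) :
    phiM k F m (t ⊗ₜ p) = polyK k m p • ((1 : KF k m) ⊗ₜ t) := by
  rw [phiM_tmul, TensorProduct.smul_tmul', smul_eq_mul, mul_one]

theorem phiM_injective : Function.Injective (phiM k F m) := by
  have h1 : Function.Injective
      (Algebra.TensorProduct.map (polyK k m) (AlgHom.id k (TPow k F m))) :=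
    Module.Flat.rTensor_preserves_injective_linearMap (M := TPow k F m) (polyK k m).toLinearMap
      (polyK_injective k m)
  exact h1.comp
    (Algebra.TensorProduct.comm k (TPow k F m) (MvPolynomial (Fin (m + 2)) k)).injective

theorem phiM_sigma (i : Fin (m + 1)) (b : BD k F m) :
    phiM k F m (sigmaB k F m i b) = tauM k F m (swPerm m i) (phiM k F m b) := by
  induction b using TensorProduct.induction_on with
  | zero => simp
  | add x y hx hy => simp only [map_add, hx, hy]
  | tmul t p =>
    rw [phiM_tmul, tauM_tmul, kap_poly, rx_sigmaT, ← phiM_tmul]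
    rfl

/-- Slot permutation of the model algebra, linear over rational functions. -/
noncomputable def thM (i j : Fin (m + 2)) : AM k F m →ₐ[KF k m] AM k F m :=
  Algebra.TensorProduct.map (AlgHom.id (KF k m) (KF k m)) (rx k F m (Equiv.swap i j))

theorem thM_tmul (i j : Fin (m + 2)) (c : KF k m) (t : TPow k F m) :
    thM k F m i j (c ⊗ₜ t) = c ⊗ₜ rx k F m (Equiv.swap i j) t := rfl

variable (Δf : Fin 2 → Fin 2 → F ⊗[k] F) (Rv : F ⊗[k] F)

/-- The elements `P^{ab}_{ij}`. -/
noncomputable def PM (a b : Fin 2) (i j : Fin (m + 2)) : AM k F m :=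
  (1 : KF k m) ⊗ₜ place k F m i j (Δf a b)

/-- The elements `R_{ij}`. -/
noncomputable def RM (i j : Fin (m + 2)) : AM k F m :=
  (1 : KF k m) ⊗ₜ place k F m i j Rv

theorem gdataM (hwf : ∀ i j, IsWeakFrobenius k F (Δf i j))
    (hsym : ∀ i j, IsSymmEl k F (Δf i j))
    (hA2 : emb12 k F (Δf 0 0) * emb23 k F (Δf 1 1) =
      emb12 k F (Δf 0 1) * emb23 k F (Δf 1 0)) : GData (PM k F m Δf) (thM k F m) where
  sym a b i j h := by rw [PM, PM, place_symm k F m h _ (hsym a b)]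
  frob a b i j y h := by
    induction y using TensorProduct.induction_on with
    | zero => simp
    | add x y hx hy => rw [mul_add, map_add, add_mul, hx, hy]
    | tmul c t =>
      rw [PM, thM_tmul, Algebra.TensorProduct.tmul_mul_tmul, Algebra.TensorProduct.tmul_mul_tmul,
        place_frob k F m h _ (hwf a b), mul_one, one_mul]
  theta a b i j l n := by rw [PM, thM_tmul, rx_place, PM]
  invol i j y := by
    induction y using TensorProduct.induction_on with
    | zero => simp
    | add x y hx hy => rw [map_add, map_add, hx, hy]
    | tmul c t =>
      rw [thM_tmul, thM_tmul, ← AlgHom.mul_apply, ← map_mul, Equiv.swap_mul_self, map_one]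
      rfl
  a2 i j l _ _ _ := by
    simp only [PM, Algebra.TensorProduct.tmul_mul_tmul]
    rw [place_A2 k F m _ _ _ _ hA2]

theorem tauM_PM (w : Equiv.Perm (Fin (m + 2))) (a b i j) :
    tauM k F m w (PM k F m Δf a b i j) = PM k F m Δf a b (w i) (w j) := by
  rw [PM, tauM_tmul, rx_place, map_one, PM]

theorem tauM_RM (w : Equiv.Perm (Fin (m + 2))) (i j) :
    tauM k F m w (RM k F m Rv i j) = RM k F m Rv (w i) (w j) := by
  rw [RM, tauM_tmul, rx_place, map_one, RM]

theorem tauM_gG (w : Equiv.Perm (Fin (m + 2))) (i j) :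
    tauM k F m w (gG (PM k F m Δf) (xK k m) i j) = gG (PM k F m Δf) (xK k m) (w i) (w j) := by
  simp only [gG, bG, tauM_smul, map_add, tauM_PM, map_inv₀, map_sub, kap_x, map_mul]

theorem RM_central (hRc : ∀ z, Rv * z = z * Rv) (i j) (h : i ≠ j) (y : AM k F m) :
    RM k F m Rv i j * y = y * RM k F m Rv i j := by
  induction y using TensorProduct.induction_on with
  | zero => simp
  | add x y hx hy => rw [mul_add, add_mul, hx, hy]
  | tmul c t =>
    rw [RM, Algebra.TensorProduct.tmul_mul_tmul, Algebra.TensorProduct.tmul_mul_tmul,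
        place_central k F m h _ hRc, mul_one, one_mul]

theorem phiM_beta (i : Fin (m + 1)) : phiM k F m (betaI k F m Δf i) =
    bG (PM k F m Δf) i.castSucc i.succ (xK k m i.castSucc) (xK k m i.succ) := by
  simp only [betaI, map_add, phiM_tmul', map_one, map_mul, one_smul]
  rfl

theorem phiM_S (i : Fin (m + 1)) : phiM k F m (SI k F m Δf i) =
    PM k F m Δf 1 0 i.castSucc i.succ - PM k F m Δf 0 1 i.castSucc i.succ := by
  simp only [SI, map_sub, phiM_tmul, map_one, TensorProduct.tmul_sub]
  rfl

theorem phiM_R (i : Fin (m + 1)) : phiM k F m (RI k F m Rv i) =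
    RM k F m Rv i.castSucc i.succ := by
  simp only [RI, phiM_tmul, map_one]
  rfl

theorem phiM_xv (i : Fin (m + 2)) (y : AM k F m) : phiM k F m (xv k F m i) * y = xK k m i • y := by
  rw [xv, phiM_tmul', smul_mul_assoc]
  have : ((1 : KF k m) ⊗ₜ[k] (1 : TPow k F m)) = 1 := rfl
  rw [this, one_mul]
  rfl

theorem pbw_injective
    (hwf : ∀ i j, IsWeakFrobenius k F (Δf i j))
    (hsym : ∀ i j, IsSymmEl k F (Δf i j))
    (hA2 : emb12 k F (Δf 0 0) * emb23 k F (Δf 1 1) =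
      emb12 k F (Δf 0 1) * emb23 k F (Δf 1 0))
    (hRc : ∀ z, Rv * z = z * Rv) (hRs : IsSymmEl k F Rv)
    (ρf : Fin (m + 1) → BD k F m →ₗ[k] BD k F m)
    (hρ : ∀ (i : Fin (m + 1)) (a : BD k F m),
      (xv k F m i.castSucc - xv k F m i.succ) * ρf i a =
        betaI k F m Δf i * a - sigmaB k F m i a * betaI k F m Δf i)
    (HwF : Equiv.Perm (Fin (m + 2)) → QWP k F m Δf Rv ρf)
    (hHw : ∀ w L, IsReducedWord m L w →
      HwF w = (L.map (genH k F m Δf Rv ρf)).prod) :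
    Function.Injective (pbwL k F m Δf Rv ρf HwF) ∧
    Function.Injective (pbwR k F m Δf Rv ρf HwF) := by
  have H := gdataM k F m Δf hwf hsym hA2
  have hx := xK_injective k m
  have hne : ∀ i : Fin (m + 1), i.castSucc ≠ i.succ := fun i => by simp [Fin.ext_iff]
  have hRs' : ∀ i j, i ≠ j → RM k F m Rv i j = RM k F m Rv j i := by
    intro i j h
    rw [RM, RM, place_symm k F m h _ hRs]
  have hRθ : ∀ i j l n, thM k F m i j (RM k F m Rv l n) =
      RM k F m Rv (Equiv.swap i j l) (Equiv.swap i j n) := by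
    intro i j l n
    rw [RM, thM_tmul, rx_place, RM]
  refine model_injective k F m Δf Rv ρf HwF hHw (phiM k F m) (phiM_injective k F m)
    (tauM k F m) (phiM_sigma k F m) (gG (PM k F m Δf) (xK k m))
    (fun i j => if i = j then 0 else RM k F m Rv i j +
      gG (PM k F m Δf) (xK k m) i j * gG (PM k F m Δf) (xK k m) j i)
    (tauM_gG k F m Δf) ?_ ?_ ?_ ?_ ?_ ?_ ?_ ?_ ?_ ?_ ?_
  · intro w i j
    by_cases h : i = j
    · simp [h]
    · rw [if_neg h, if_neg (fun h' => h (w.injective h')), map_add, map_mul, tauM_RM, tauM_gG,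
        tauM_gG]
  · intro i j
    by_cases h : i = j
    · simp [h]
    · rw [if_neg h, if_neg (Ne.symm h), hRs' i j h, H.hgg]
  · intro i j y
    by_cases h : i = j
    · simp [h]
    · rw [if_neg h, add_mul, mul_add, RM_central k F m Rv hRc i j h, H.gg_central h]
  · intro a b c hab hbc hac
    exact H.h1 hx hab hbc hac
  · intro a b c hab hbc hac
    exact H.h2 hx hab hbc hac
  · intro a b c hab hbc hac
    rw [if_neg hab, if_neg hbc]
    exact H.h3 hx (fun i j y h => RM_central k F m Rv hRc i j h y) hRs' hRθ hab hbc hac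
  · intro a b c d hab hcd hac had hbc hbd
    rw [H.gfrob hab]
    congr 1
    simp only [gG, map_smul, H.btheta, Equiv.swap_apply_of_ne_of_ne hac.symm hbc.symm,
      Equiv.swap_apply_of_ne_of_ne had.symm hbd.symm]
  · intro i
    rw [phiM_S]
    exact H.hS hx (hne i)
  · intro i
    rw [if_neg (hne i), phiM_R]
  · exact H.hgg
  · intro i b
    have h := congrArg (phiM k F m) (hρ i b)
    rw [map_mul, map_sub, map_sub, map_mul, map_mul, sub_mul, phiM_xv, phiM_xv,
      phiM_beta] at h
    exact gG_wreath hx (hne i) _ _ _ h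

end Concrete

/-- **PBW theorem for quantum wreath products of polynomial type.**  The maps
`b ⊗ w ↦ b·H_w` and `b ⊗ w ↦ H_w·b` from `B^{⊗d} ⊗ 𝕜[S_d]` (modelled as finitely
supported `B^{⊗d}`-valued functions on `S_d`) to `B ≀ H(d)` are bijective. -/
theorem stmt14 [Field k] [Ring F] [Algebra k F] [FiniteDimensional k F]
    (Δf : Fin 2 → Fin 2 → F ⊗[k] F)
    (hwf : ∀ i j, IsWeakFrobenius k F (Δf i j))
    (hsym : ∀ i j, IsSymmEl k F (Δf i j))
    (hA2 : emb12 k F (Δf 0 0) * emb23 k F (Δf 1 1) =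
      emb12 k F (Δf 0 1) * emb23 k F (Δf 1 0))
    (Rv : F ⊗[k] F) (hRc : ∀ z, Rv * z = z * Rv) (hRs : IsSymmEl k F Rv)
    (ρf : Fin (m + 1) → BD k F m →ₗ[k] BD k F m)
    (hρ : ∀ (i : Fin (m + 1)) (a : BD k F m),
      (xv k F m i.castSucc - xv k F m i.succ) * ρf i a =
        betaI k F m Δf i * a - sigmaB k F m i a * betaI k F m Δf i)
    -- `H_w`, for any choice of reduced expression
    (HwF : Equiv.Perm (Fin (m + 2)) → QWP k F m Δf Rv ρf)
    (hHw : ∀ w L, IsReducedWord m L w →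
      HwF w = (L.map (genH k F m Δf Rv ρf)).prod) :
    Function.Bijective (fun f : Equiv.Perm (Fin (m + 2)) →₀ BD k F m =>
      f.sum fun w b => embB k F m Δf Rv ρf b * HwF w) ∧
    Function.Bijective (fun f : Equiv.Perm (Fin (m + 2)) →₀ BD k F m =>
      f.sum fun w b => HwF w * embB k F m Δf Rv ρf b) := by
  obtain ⟨iL, iR⟩ := pbw_injective k F m Δf Rv hwf hsym hA2 hRc hRs ρf hρ HwF hHw
  exact ⟨⟨iL, pbwL_surj k F m Δf Rv ρf HwF hHw⟩, ⟨iR, pbwR_surj k F m Δf Rv ρf HwF hHw⟩⟩
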